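/- arXiv:math/9909142 — 2 statements merged into one kernel-verified Lean document; each statement's English description precedes it below -/
import Mathlib

section
/- Descent of quasi-projectivity along field extensions in characteristic zero: Let k be a field of characteristic zero, K a field extension of k, and Y a scheme over k. If the base change Y ×_{Spec k} Spec K is quasi-projective over K, then Y is quasi-projective over k. -/
open AlgebraicGeometry CategoryTheory CategoryTheory.Limits

noncomputable section

namespace Paper

attribute [local instance] MvPolynomial.gradedAlgebra

/-- Projective `n`-space over a ring `K`, as `Proj` of the polynomial ring in `n + 1`
variables with its grading by total degree. -/
def ProjSpace (K : Type) [CommRing K] (n : ℕ) : Scheme :=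
  Proj (MvPolynomial.homogeneousSubmodule (Fin (n + 1)) K)

/-- The structure morphism `ℙⁿ_K ⟶ Spec K`. -/
def ProjSpace.structMap (K : Type) [CommRing K] (n : ℕ) :
    ProjSpace K n ⟶ Spec (CommRingCat.of K) :=
  Proj.toSpecZero _ ≫ Spec.map (CommRingCat.ofHom
    (algebraMap K (MvPolynomial.homogeneousSubmodule (Fin (n + 1)) K 0)))

/-- A scheme `Y` with structure morphism `p : Y ⟶ Spec K` is quasi-projective over `K` if
for some `n` there is an immersion (locally closed immersion) `Y ⟶ ℙⁿ_K` over `K`. -/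
def QuasiProjectiveOver (K : Type) [CommRing K] {Y : Scheme}
    (p : Y ⟶ Spec (CommRingCat.of K)) : Prop :=
  ∃ (n : ℕ) (f : Y ⟶ ProjSpace K n), IsImmersion f ∧ f ≫ ProjSpace.structMap K n = p

/-- A scheme `Y` with structure morphism `p : Y ⟶ Spec K` is quasi-affine over `K` if it is
of finite type over `K` and admits an open immersion over `K` into an affine `K`-scheme. -/
def QuasiAffineOver (K : Type) [CommRing K] {Y : Scheme}
    (p : Y ⟶ Spec (CommRingCat.of K)) : Prop :=
  LocallyOfFiniteType p ∧ QuasiCompact p ∧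
    ∃ (Z : Scheme) (q : Z ⟶ Spec (CommRingCat.of K)) (j : Y ⟶ Z),
      IsAffine Z ∧ IsOpenImmersion j ∧ j ≫ q = p

variable (k K : Type) [Field k] [Field K] [Algebra k K]

/-!
An immersion of `Y_K` into projective space is defined over a `k`-algebra of finite type.
Specialising it at a closed point and passing to a Galois closure gives an immersion of `Y_L` for a
finite Galois extension `L` of `k`. Locally on `Y` it has homogeneous coordinates
`s : Fin (n + 1) → R ⊗[k] L`; for a basis `b` of `L` over `k`, the traces
`Tr (bⱼ · ∏ σ, σ (s (I σ)))`, where `I : Gal(L/k) → Fin (n + 1)`, lie in `R`. Rescaling `s` by a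
unit multiplies them all by its norm, so they glue to a morphism from `Y` to projective space over
`k`.
The dual basis for the trace form turns linear combinations of them over `L` into the products
`∏ σ, σ (s (I σ))`, hence, varying `I 1` only, recovers `s` up to a common factor. The morphism
therefore becomes an immersion over `L`, and immersions descend along faithfully flat morphisms of
finite presentation.
-/

/-! ### Morphisms to `Proj` from affine schemes -/

section ProjOfRingHom

open HomogeneousLocalization

variable {σ A S T : Type} [CommRing A] [SetLike σ A] [AddSubgroupClass σ A] (𝒜 : ℕ → σ)
  [GradedRing 𝒜] [CommRing S] [CommRing T]

/-- The morphism of affine schemes attached to a ring homomorphism. -/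
abbrev specMap (φ : S →+* T) : Spec (.of T) ⟶ Spec (.of S) :=
  Spec.map (CommRingCat.ofHom φ)

lemma specMap_comp {U : Type} [CommRing U] (φ : S →+* T) (ψ : T →+* U) :
    specMap (ψ.comp φ) = specMap ψ ≫ specMap φ :=
  Spec.map_comp _ _

lemma specMap_injective : Function.Injective (specMap : (S →+* T) → _) :=
  fun _ _ h ↦ congrArg CommRingCat.Hom.hom (Spec.map_injective h)

/-- The ring homomorphism out of the degree-zero part of `A[1/t]` induced by a ring homomorphism
`φ` out of `A` which inverts `t`. -/
def awayLift (φ : A →+* S) (t : A) (ht : IsUnit (φ t)) : Away 𝒜 t →+* S :=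
  (IsLocalization.Away.lift (S := Localization.Away t) t ht).comp
    (algebraMap (Away 𝒜 t) (Localization.Away t))

lemma awayLift_mk_mul_pow (φ : A →+* S) {t : A} (ht : IsUnit (φ t)) {d : ℕ} (hd : t ∈ 𝒜 d)
    (n : ℕ) (a : A) (ha : a ∈ 𝒜 (n • d)) :
    awayLift 𝒜 φ t ht (Away.mk 𝒜 hd n a ha) * φ t ^ n = φ a := by
  simp only [awayLift, RingHom.comp_apply, HomogeneousLocalization.algebraMap_apply, Away.val_mk]
  rw [← map_pow, ← IsLocalization.Away.lift_eq (S := Localization.Away t) t ht, ← map_mul,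
    ← IsLocalization.Away.lift_eq (S := Localization.Away t) t ht, Localization.mk_eq_mk',
    IsLocalization.mk'_spec]

lemma awayLift_comp {B : Type} [CommRing B] (f : A →+* B) (ψ : B →+* S) (t : A)
    (ht : IsUnit (ψ (f t)))
    (h : Submonoid.powers t ≤ (Submonoid.powers (f t)).comap f) :
    awayLift 𝒜 (ψ.comp f) t ht = (IsLocalization.Away.lift (S := Localization.Away (f t)) _ ht).comp
      ((IsLocalization.map (M := .powers t) (T := .powers (f t)) (Localization.Away (f t)) f h).comp
        (algebraMap (Away 𝒜 t) (Localization.Away t))) := by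
  rw [awayLift, ← RingHom.comp_assoc]
  congr 1
  refine IsLocalization.ringHom_ext (M := .powers t) (RingHom.ext fun a ↦ ?_)
  simp

lemma exists_basicOpen_ι_comp_fromOfGlobalSections {X : Scheme.{0}} (f : A →+* Γ(X, ⊤))
    (hf : (HomogeneousIdeal.irrelevant 𝒜).toIdeal.map f = ⊤) {t : A} {d : ℕ} (hd₀ : 0 < d)
    (hd : t ∈ 𝒜 d) (h : Submonoid.powers t ≤ (Submonoid.powers (f t)).comap f) :
    ∃ e : (X.basicOpen (f t)).toScheme ⟶ Spec (.of (Localization.Away (f t))),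
      e ≫ specMap (algebraMap Γ(X, ⊤) _) = (X.basicOpen (f t)).ι ≫ X.toSpecΓ ∧
      (X.basicOpen (f t)).ι ≫ Proj.fromOfGlobalSections 𝒜 f hf =
        e ≫ specMap ((IsLocalization.map (M := .powers t) (T := .powers (f t))
          (Localization.Away (f t)) f h).comp
            (algebraMap (Away 𝒜 t) (Localization.Away t))) ≫ Proj.awayι 𝒜 t hd hd₀ := by
  refine ⟨(X.isoOfEq (X.toSpecΓ_preimage_basicOpen (f t))).inv ≫
    X.toSpecΓ ∣_ (PrimeSpectrum.basicOpen (f t)) ≫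
      (basicOpenIsoSpecAway (R := Γ(X, ⊤)) (f t)).hom, ?_, ?_⟩
  · simp only [basicOpenIsoSpecAway, Category.assoc, Scheme.isoOfEq_inv]
    rw [IsOpenImmersion.isoOfRangeEq_hom_fac]
    refine (congrArg (X.homOfLE _ ≫ ·) (morphismRestrict_ι X.toSpecΓ _)).trans ?_
    exact Scheme.homOfLE_ι_assoc _ _ _
  · have h₁ := congr($(Proj.fromOfGlobalSections_resLE 𝒜 f hf hd₀ hd) ≫ (Proj.basicOpen 𝒜 t).ι)
    rw [Scheme.Hom.resLE_comp_ι] at h₁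
    simp only [h₁, Proj.toBasicOpenOfGlobalSections, Category.assoc, Proj.basicOpenIsoSpec_inv_ι]

lemma comp_fromOfGlobalSections {X : Scheme.{0}} (g : Spec (.of S) ⟶ X) (ψ : Γ(X, ⊤) →+* S)
    (hψ : g ≫ X.toSpecΓ = specMap ψ) (f : A →+* Γ(X, ⊤))
    (hf : (HomogeneousIdeal.irrelevant 𝒜).toIdeal.map f = ⊤) {t : A} {d : ℕ} (hd₀ : 0 < d)
    (hd : t ∈ 𝒜 d) (ht : IsUnit (ψ (f t))) :
    g ≫ Proj.fromOfGlobalSections 𝒜 f hf =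
      specMap (awayLift 𝒜 (ψ.comp f) t ht) ≫ Proj.awayι 𝒜 t hd hd₀ := by
  have h : Submonoid.powers t ≤ (Submonoid.powers (f t)).comap f := by
    rw [← Submonoid.map_le_iff_le_comap, Submonoid.map_powers]
  obtain ⟨e, he, hfe⟩ := exists_basicOpen_ι_comp_fromOfGlobalSections 𝒜 f hf hd₀ hd h
  have hg : Set.range g ⊆ Set.range (X.basicOpen (f t)).ι := by
    rw [Scheme.Opens.range_ι, ← X.toSpecΓ_preimage_basicOpen]
    rintro _ ⟨x, rfl⟩
    change (g ≫ X.toSpecΓ) x ∈ PrimeSpectrum.basicOpen (f t)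
    rw [hψ]
    exact fun hx ↦ x.2.ne_top (Ideal.eq_top_of_isUnit_mem _ hx ht)
  obtain ⟨g, rfl⟩ : ∃ g', g' ≫ (X.basicOpen (f t)).ι = g := ⟨_, IsOpenImmersion.lift_fac _ g hg⟩
  have hge : g ≫ e = specMap (IsLocalization.Away.lift (S := Localization.Away (f t)) _ ht) := by
    have : IsOpenImmersion (specMap (algebraMap Γ(X, ⊤) (Localization.Away (f t)))) :=
      inferInstance
    rw [← cancel_mono (specMap (algebraMap Γ(X, ⊤) (Localization.Away (f t)))), Category.assoc, he,
      ← Category.assoc, hψ, ← specMap_comp]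
    congr
    ext a
    simp
  rw [Category.assoc, hfe, ← Category.assoc, hge, awayLift_comp 𝒜 f ψ t ht h]
  simp only [specMap_comp, Category.assoc]

lemma map_ΓSpecIso_inv_comp_irrelevant (φ : A →+* S)
    (hφ : (HomogeneousIdeal.irrelevant 𝒜).toIdeal.map φ = ⊤) :
    (HomogeneousIdeal.irrelevant 𝒜).toIdeal.map ((Scheme.ΓSpecIso (.of S)).inv.hom.comp φ) = ⊤ := by
  rw [← Ideal.map_map]
  exact (congrArg _ hφ).trans (Ideal.map_top _)

/-- The morphism `Spec S ⟶ Proj 𝒜` induced by a ring homomorphism `A →+* S` which maps the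
irrelevant ideal onto generators of the unit ideal. -/
def specToProj (φ : A →+* S) (hφ : (HomogeneousIdeal.irrelevant 𝒜).toIdeal.map φ = ⊤) :
    Spec (.of S) ⟶ Proj 𝒜 :=
  Proj.fromOfGlobalSections 𝒜 ((Scheme.ΓSpecIso (.of S)).inv.hom.comp φ)
    (map_ΓSpecIso_inv_comp_irrelevant 𝒜 φ hφ)

variable (φ : A →+* S) (hφ : (HomogeneousIdeal.irrelevant 𝒜).toIdeal.map φ = ⊤)

lemma specToProj_preimage_basicOpen {t : A} {d : ℕ} (hd₀ : 0 < d) (hd : t ∈ 𝒜 d) :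
    specToProj 𝒜 φ hφ ⁻¹ᵁ Proj.basicOpen 𝒜 t = PrimeSpectrum.basicOpen (φ t) := by
  rw [specToProj, Proj.fromOfGlobalSections_preimage_basicOpen _ _ _ hd₀ hd]
  exact (basicOpen_eq_of_affine' _).trans (by simp; rfl)

lemma specMap_comp_specToProj (g : S →+* T) {t : A} {d : ℕ} (hd₀ : 0 < d) (hd : t ∈ 𝒜 d)
    (ht : IsUnit (g (φ t))) :
    specMap g ≫ specToProj 𝒜 φ hφ =
      specMap (awayLift 𝒜 (g.comp φ) t ht) ≫ Proj.awayι 𝒜 t hd hd₀ := by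
  have hψ : specMap g ≫ (Spec (.of S)).toSpecΓ =
      specMap (g.comp (Scheme.ΓSpecIso (.of S)).hom.hom) := by
    rw [specMap_comp]
    exact congrArg (specMap g ≫ ·) (SpecMap_ΓSpecIso_hom _).symm
  have hcomp : (g.comp (Scheme.ΓSpecIso (.of S)).hom.hom).comp
      ((Scheme.ΓSpecIso (.of S)).inv.hom.comp φ) = g.comp φ := by
    ext a
    simp
  have ht' := ht
  rw [← RingHom.comp_apply, ← hcomp] at ht'
  refine (comp_fromOfGlobalSections 𝒜 _ _ hψ _ _ hd₀ hd ht').trans ?_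
  simp only [hcomp]

lemma specToProj_toSpecZero :
    specToProj 𝒜 φ hφ ≫ Proj.toSpecZero 𝒜 = specMap (φ.comp (algebraMap (𝒜 0) A)) := by
  rw [specToProj, Proj.fromOfGlobalSections_toSpecZero, RingHom.comp_assoc, CommRingCat.ofHom_comp,
    Spec.map_comp]
  exact toSpecΓ_SpecMap_ΓSpecIso_inv_assoc _ _

end ProjOfRingHom

/-! ### Homogeneous coordinates and charts -/

namespace ProjSpace

open MvPolynomial HomogeneousLocalization

/-- The grading of `A[X₀, …, Xₙ]` by total degree, of which `ℙⁿ_A` is the `Proj`. -/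
abbrev grading (A : Type) [CommRing A] (n : ℕ) : ℕ → Submodule A (MvPolynomial (Fin (n + 1)) A) :=
  homogeneousSubmodule (Fin (n + 1)) A

variable (A : Type) [CommRing A] {n : ℕ} {S : Type} [CommRing S] [Algebra A S]
  {T : Type} [CommRing T] [Algebra A T]

/-- The linear form `∑ cᵢ Xᵢ`. -/
def linForm (c : Fin (n + 1) → A) : MvPolynomial (Fin (n + 1)) A := ∑ i, c i • X i

variable {A} in
/-- The value `∑ cᵢ sᵢ` of a linear form with coefficients in `A` at a vector over an
`A`-algebra. -/
def linEval (c : Fin (n + 1) → A) (s : Fin (n + 1) → S) : S := ∑ i, c i • s i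

lemma X_mem_grading (i : Fin (n + 1)) : (X i : MvPolynomial (Fin (n + 1)) A) ∈ grading A n 1 :=
  isHomogeneous_X A i

lemma linForm_mem_grading (c : Fin (n + 1) → A) : linForm A c ∈ grading A n 1 :=
  Submodule.sum_mem _ fun i _ ↦ Submodule.smul_mem _ _ (X_mem_grading A i)

lemma linForm_single (i : Fin (n + 1)) : linForm A (Pi.single i 1) = X i := by
  simp [linForm, Pi.single_apply]

@[simp]
lemma eval₂Hom_linForm (c : Fin (n + 1) → A) (s : Fin (n + 1) → S) :
    eval₂Hom (algebraMap A S) s (linForm A c) = linEval c s := by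
  simp [linForm, linEval, Algebra.smul_def]

variable {A}

@[simp]
lemma linEval_single (i : Fin (n + 1)) (s : Fin (n + 1) → S) :
    linEval (Pi.single i (1 : A)) s = s i := by
  simp [linEval, Pi.single_apply]

lemma linEval_comp (c : Fin (n + 1) → A) (s : Fin (n + 1) → S) (g : S →ₐ[A] T) :
    linEval c (g ∘ s) = g (linEval c s) := by
  simp [linEval]

lemma linEval_smul (c : Fin (n + 1) → A) (u : S) (s : Fin (n + 1) → S) :
    linEval c (u • s) = u * linEval c s := by
  simp [linEval, Finset.mul_sum]

lemma linEval_mem_span (c : Fin (n + 1) → A) (s : Fin (n + 1) → S) :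
    linEval c s ∈ Ideal.span (Set.range s) :=
  Submodule.sum_mem _ fun i _ ↦ Submodule.smul_of_tower_mem _ _ (Ideal.subset_span ⟨i, rfl⟩)

lemma span_range_eq_top_of_isUnit_linEval {c : Fin (n + 1) → A} {s : Fin (n + 1) → S}
    (h : IsUnit (linEval c s)) : Ideal.span (Set.range s) = ⊤ :=
  Ideal.eq_top_of_isUnit_mem _ (linEval_mem_span c s) h

lemma span_range_comp_eq_top {F : Type} [FunLike F S T] [RingHomClass F S T] (g : F)
    {s : Fin (n + 1) → S}
    (hs : Ideal.span (Set.range s) = ⊤) : Ideal.span (Set.range (g ∘ s)) = ⊤ := by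
  rw [Set.range_comp, ← Ideal.map_span, hs, Ideal.map_top]

variable (A)

lemma map_eval₂Hom_irrelevant {s : Fin (n + 1) → S} (hs : Ideal.span (Set.range s) = ⊤) :
    (HomogeneousIdeal.irrelevant (grading A n)).toIdeal.map
      (eval₂Hom (algebraMap A S) s) = ⊤ := by
  rw [eq_top_iff, ← hs, Ideal.span_le]
  rintro _ ⟨i, rfl⟩
  have hX : (X i : MvPolynomial (Fin (n + 1)) A) ∈ HomogeneousIdeal.irrelevant (grading A n) :=
    (HomogeneousIdeal.mem_irrelevant_iff _ _).2
      (DirectSum.decompose_of_mem_ne _ (X_mem_grading A i) one_ne_zero)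
  simpa using Ideal.mem_map_of_mem (eval₂Hom (algebraMap A S) s) hX

/-- The morphism `Spec S ⟶ ℙⁿ_A` with homogeneous coordinates `s₀, …, sₙ`. -/
def ofCoords (s : Fin (n + 1) → S) (hs : Ideal.span (Set.range s) = ⊤) :
    Spec (.of S) ⟶ ProjSpace A n :=
  specToProj (grading A n) (eval₂Hom (algebraMap A S) s) (map_eval₂Hom_irrelevant A hs)

lemma ofCoords_structMap (s : Fin (n + 1) → S) (hs : Ideal.span (Set.range s) = ⊤) :
    ofCoords A s hs ≫ structMap A n = specMap (algebraMap A S) := by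
  refine (Category.assoc _ _ _).symm.trans ?_
  refine (congrArg (· ≫ specMap (algebraMap A (grading A n 0)))
    (specToProj_toSpecZero (grading A n) _ (map_eval₂Hom_irrelevant A hs))).trans ?_
  rw [← specMap_comp]
  congr
  ext a
  simp

variable {A}

/-- The open subscheme of `ℙⁿ_A` on which the linear form `∑ cᵢ Xᵢ` does not vanish. -/
def basicOpen (c : Fin (n + 1) → A) : (ProjSpace A n).Opens :=
  Proj.basicOpen (grading A n) (linForm A c)

lemma ofCoords_preimage_basicOpen (s : Fin (n + 1) → S) (hs : Ideal.span (Set.range s) = ⊤)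
    (c : Fin (n + 1) → A) :
    ofCoords A s hs ⁻¹ᵁ basicOpen c = PrimeSpectrum.basicOpen (linEval c s) := by
  rw [← eval₂Hom_linForm]
  exact specToProj_preimage_basicOpen _ _ _ one_pos (linForm_mem_grading A c)

lemma iSup_basicOpen_single : ⨆ i : Fin (n + 1), basicOpen (Pi.single i (1 : A)) = ⊤ := by
  simp only [basicOpen, linForm_single]
  refine Proj.iSup_basicOpen_eq_top' (grading A n) _ (fun i ↦ ⟨1, X_mem_grading A i⟩) ?_
  refine eq_top_iff.2 fun p _ ↦ ?_
  induction p using MvPolynomial.induction_on with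
  | C a =>
    exact Subalgebra.algebraMap_mem _ (⟨_, isHomogeneous_C _ a⟩ : grading A n 0)
  | add p q hp hq => exact add_mem (hp trivial) (hq trivial)
  | mul_X p i hp => exact mul_mem (hp trivial) (Algebra.subset_adjoin ⟨i, rfl⟩)

/-- The coordinate ring of the chart `basicOpen c`. -/
def ChartRing (c : Fin (n + 1) → A) : Type := Away (grading A n) (linForm A c)

instance (c : Fin (n + 1) → A) : CommRing (ChartRing c) :=
  inferInstanceAs (CommRing (Away (grading A n) (linForm A c)))

instance (c : Fin (n + 1) → A) : Algebra A (ChartRing c) :=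
  ((fromZeroRingHom (grading A n) _).comp (algebraMap A (grading A n 0))).toAlgebra

/-- The coordinate functions on a chart: `Xᵢ` divided by the linear form which defines the
chart. -/
def chartCoord (c : Fin (n + 1) → A) (i : Fin (n + 1)) : ChartRing c :=
  Away.mk (grading A n) (linForm_mem_grading A c) 1 (X i) (by simpa using X_mem_grading A i)

/-- The inclusion of the chart `basicOpen c`. -/
def chartι (c : Fin (n + 1) → A) : Spec (.of (ChartRing c)) ⟶ ProjSpace A n :=
  Proj.awayι (grading A n) (linForm A c) (linForm_mem_grading A c) one_pos

instance (c : Fin (n + 1) → A) : IsOpenImmersion (chartι c) :=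
  inferInstanceAs (IsOpenImmersion (Proj.awayι (grading A n) (linForm A c) _ one_pos))

lemma opensRange_chartι (c : Fin (n + 1) → A) : (chartι c).opensRange = basicOpen c :=
  Proj.opensRange_awayι _ _ _ _

lemma chartι_structMap (c : Fin (n + 1) → A) :
    chartι c ≫ structMap A n = specMap (algebraMap A (ChartRing c)) := by
  refine (Category.assoc _ _ _).symm.trans ?_
  refine (congrArg (· ≫ specMap (algebraMap A (grading A n 0)))
    (Proj.awayι_toSpecZero (grading A n) _ (linForm_mem_grading A c) one_pos)).trans ?_
  rw [← specMap_comp]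
  rfl

lemma aeval_smul_of_isHomogeneous {m : ℕ} {p : MvPolynomial (Fin (n + 1)) A}
    (hp : p.IsHomogeneous m) (u : S) (s : Fin (n + 1) → S) :
    aeval (u • s) p = u ^ m * aeval s p := by
  simp only [aeval_def, eval₂_eq, Finset.mul_sum, Pi.smul_apply, smul_eq_mul, mul_pow,
    Finset.prod_mul_distrib, Finset.prod_pow_eq_pow_sum]
  refine Finset.sum_congr rfl fun d hd ↦ ?_
  have hdeg : ∑ i ∈ d.support, d i = m := by
    simpa [Finsupp.weight_apply, Finsupp.sum] using hp (mem_support_iff.1 hd)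
  rw [hdeg]
  ring

/-- The embedding of the coordinate ring of a chart into the localization of the polynomial
ring. -/
def chartVal (c : Fin (n + 1) → A) : ChartRing c →ₐ[A] Localization.Away (linForm A c) where
  __ := algebraMap (Away (grading A n) (linForm A c)) (Localization.Away (linForm A c))
  commutes' r := by
    change algebraMap (Away (grading A n) (linForm A c)) (Localization.Away (linForm A c))
      (fromZeroRingHom (grading A n) _ (algebraMap A (grading A n 0) r)) = _
    rw [← HomogeneousLocalization.algebraMap_eq, ← IsScalarTower.algebraMap_apply,
      IsScalarTower.algebraMap_apply (grading A n 0) (MvPolynomial (Fin (n + 1)) A)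
        (Localization.Away _),
      IsScalarTower.algebraMap_apply A (MvPolynomial (Fin (n + 1)) A) (Localization.Away _)]
    rfl

lemma chartVal_injective (c : Fin (n + 1) → A) : Function.Injective (chartVal c) :=
  HomogeneousLocalization.val_injective _

lemma chartVal_mk (c : Fin (n + 1) → A) (m : ℕ) (a : MvPolynomial (Fin (n + 1)) A)
    (ha : a ∈ grading A n (m • 1)) :
    chartVal c (Away.mk (grading A n) (linForm_mem_grading A c) m a ha) =
      IsLocalization.Away.invSelf (linForm A c) ^ m * algebraMap _ _ a := by
  have h : chartVal c (Away.mk (grading A n) (linForm_mem_grading A c) m a ha) =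
      Localization.mk a (⟨linForm A c ^ m, m, rfl⟩ : Submonoid.powers (linForm A c)) :=
    Away.val_mk _ m (linForm_mem_grading A c) a ha
  rw [h, Localization.mk_eq_mk', IsLocalization.mk'_eq_iff_eq_mul, mul_right_comm, map_pow,
    ← mul_pow, mul_comm (IsLocalization.Away.invSelf _), IsLocalization.Away.mul_invSelf, one_pow,
    one_mul]

lemma chartVal_comp_chartCoord (c : Fin (n + 1) → A) :
    chartVal c ∘ chartCoord c =
      IsLocalization.Away.invSelf (S := Localization.Away (linForm A c)) (linForm A c) •
        (algebraMap (MvPolynomial (Fin (n + 1)) A) (Localization.Away (linForm A c)) ∘ X) := by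
  funext i
  refine (chartVal_mk c 1 (X i) _).trans ?_
  simp

lemma linEval_chartCoord (c : Fin (n + 1) → A) : linEval c (chartCoord c) = 1 := by
  apply chartVal_injective
  have h := linEval_comp c X (IsScalarTower.toAlgHom A (MvPolynomial (Fin (n + 1)) A)
    (Localization.Away (linForm A c)))
  rw [map_one, ← linEval_comp, chartVal_comp_chartCoord, linEval_smul]
  refine (congrArg (_ * ·) h).trans ?_
  rw [mul_comm]
  exact IsLocalization.Away.mul_invSelf (linForm A c)

lemma aeval_chartCoord_surjective (c : Fin (n + 1) → A) :
    Function.Surjective (aeval (R := A) (chartCoord c)) := by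
  intro x
  obtain ⟨m, a, ha, rfl⟩ := Away.mk_surjective (grading A n) (linForm_mem_grading A c) x
  refine ⟨a, chartVal_injective c ?_⟩
  have h := comp_aeval_apply (R := A) (f := X)
    (IsScalarTower.toAlgHom A (MvPolynomial (Fin (n + 1)) A) (Localization.Away (linForm A c))) a
  refine Eq.trans ?_ (chartVal_mk c m a ha).symm
  refine (comp_aeval_apply (f := chartCoord c) (chartVal c) a).trans ?_
  refine (congrArg (aeval · a) (chartVal_comp_chartCoord c)).trans ?_
  rw [aeval_smul_of_isHomogeneous (m := m) (by simpa using ha)]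
  refine congrArg (IsLocalization.Away.invSelf (linForm A c) ^ m * ·) (h.symm.trans ?_)
  simp

lemma chartRing_hom_ext {c : Fin (n + 1) → A} {f g : ChartRing c →ₐ[A] S}
    (h : f ∘ chartCoord c = g ∘ chartCoord c) : f = g := by
  ext x
  obtain ⟨a, rfl⟩ := aeval_chartCoord_surjective c x
  refine (comp_aeval_apply (f := chartCoord c) f a).trans
    (Eq.trans ?_ (comp_aeval_apply (f := chartCoord c) g a).symm)
  exact congrArg (aeval · a) h

/-- The homomorphism out of the coordinate ring of a chart which sends the coordinates to those
of `s`, normalised by the value of the linear form which defines the chart. -/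
def chartLift (c : Fin (n + 1) → A) (s : Fin (n + 1) → S) (hs : IsUnit (linEval c s)) :
    ChartRing c →ₐ[A] S where
  __ := awayLift (grading A n) (eval₂Hom (algebraMap A S) s) (linForm A c)
    (by rwa [← eval₂Hom_linForm] at hs)
  commutes' r := by
    change awayLift (grading A n) _ (linForm A c) _
      (fromZeroRingHom (grading A n) _ (algebraMap A (grading A n 0) r)) = _
    simp only [awayLift]
    rw [RingHom.comp_apply, ← HomogeneousLocalization.algebraMap_eq,
      ← IsScalarTower.algebraMap_apply, IsScalarTower.algebraMap_apply _
      (MvPolynomial (Fin (n + 1)) A) (Localization.Away (linForm A c)), IsLocalization.Away.lift_eq]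
    exact eval₂Hom_C _ s r

lemma chartLift_chartCoord_mul (c : Fin (n + 1) → A) (s : Fin (n + 1) → S)
    (hs : IsUnit (linEval c s)) (i : Fin (n + 1)) :
    chartLift c s hs (chartCoord c i) * linEval c s = s i := by
  have h := awayLift_mk_mul_pow (grading A n) (eval₂Hom (algebraMap A S) s)
    (by rwa [← eval₂Hom_linForm] at hs) (linForm_mem_grading A c) 1 (X i)
    (by simpa using X_mem_grading A i)
  simp only [pow_one, eval₂Hom_linForm, eval₂Hom_X'] at h
  exact h

lemma chartLift_eq_of_comp {c : Fin (n + 1) → A} (g : ChartRing c →ₐ[A] S)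
    (hg : IsUnit (linEval c (g ∘ chartCoord c))) : chartLift c (g ∘ chartCoord c) hg = g := by
  refine chartRing_hom_ext (funext fun i ↦ ?_)
  have h := chartLift_chartCoord_mul c _ hg i
  rwa [linEval_comp, linEval_chartCoord, map_one, mul_one] at h

lemma chartLift_eq_chartLift_iff (c : Fin (n + 1) → A) {s s' : Fin (n + 1) → S}
    (hs : IsUnit (linEval c s)) (hs' : IsUnit (linEval c s')) :
    chartLift c s hs = chartLift c s' hs' ↔ ∀ i, s i * linEval c s' = s' i * linEval c s := by
  refine ⟨fun h i ↦ ?_, fun h ↦ chartRing_hom_ext (funext fun i ↦ ?_)⟩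
  · rw [← chartLift_chartCoord_mul c s hs i, ← chartLift_chartCoord_mul c s' hs' i, h]
    ring
  · have := h i
    rw [← chartLift_chartCoord_mul c s hs i, ← chartLift_chartCoord_mul c s' hs' i] at this
    exact (hs.mul hs').mul_right_cancel
      (by simp only [Function.comp_apply]; linear_combination this)

lemma specMap_comp_ofCoords_eq_chartLift (c : Fin (n + 1) → A) (s : Fin (n + 1) → S)
    (hs : Ideal.span (Set.range s) = ⊤) (g : S →ₐ[A] T) (hu : IsUnit (linEval c (g ∘ s))) :
    specMap (g : S →+* T) ≫ ofCoords A s hs =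
      specMap (chartLift c (g ∘ s) hu : _ →+* T) ≫ chartι c := by
  have hg : (g : S →+* T).comp (eval₂Hom (algebraMap A S) s) =
      eval₂Hom (algebraMap A T) (g ∘ s) := by
    ext <;> simp
  have hu' : IsUnit ((g : S →+* T) ((eval₂Hom (algebraMap A S) s) (linForm A c))) := by
    rw [← RingHom.comp_apply, hg]
    simpa using hu
  refine (specMap_comp_specToProj (grading A n) _ (map_eval₂Hom_irrelevant A hs) (g : S →+* T)
    one_pos (linForm_mem_grading A c) hu').trans ?_
  refine congrArg (· ≫ chartι c) ?_
  congr 2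

lemma ofCoords_eq_chartLift (c : Fin (n + 1) → A) (s : Fin (n + 1) → S)
    (hs : Ideal.span (Set.range s) = ⊤) (hu : IsUnit (linEval c s)) :
    ofCoords A s hs = specMap (chartLift c s hu : _ →+* S) ≫ chartι c := by
  refine Eq.trans ?_ (specMap_comp_ofCoords_eq_chartLift c s hs (AlgHom.id A S) hu)
  exact ((congrArg (· ≫ ofCoords A s hs) (Spec.map_id _)).trans (Category.id_comp _)).symm

lemma chartι_eq_ofCoords (c : Fin (n + 1) → A) :
    chartι c = ofCoords A (chartCoord c) (span_range_eq_top_of_isUnit_linEval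
      (c := c) (by rw [linEval_chartCoord]; exact isUnit_one)) := by
  have hu : IsUnit (linEval c (AlgHom.id A _ ∘ chartCoord c)) := by
    rw [linEval_comp, linEval_chartCoord, map_one]
    exact isUnit_one
  refine Eq.trans ?_ (ofCoords_eq_chartLift c (AlgHom.id A _ ∘ chartCoord c) _ hu).symm
  rw [chartLift_eq_of_comp]
  exact ((congrArg (· ≫ chartι c) (Spec.map_id _)).trans (Category.id_comp _)).symm

end ProjSpace

namespace ProjSpace

variable {A : Type} [CommRing A] {n : ℕ} {S : Type} [CommRing S] [Algebra A S]
  {T : Type} [CommRing T] [Algebra A T]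

lemma spec_hom_ext_of_span_eq_top {ι : Type} {s : ι → S} (hs : Ideal.span (Set.range s) = ⊤)
    {X : Scheme.{0}} {f g : Spec (.of S) ⟶ X}
    (h : ∀ i, specMap (algebraMap S (Localization.Away (s i))) ≫ f =
      specMap (algebraMap S (Localization.Away (s i))) ≫ g) : f = g :=
  (Scheme.affineOpenCoverOfSpanRangeEqTop (R := .of S) s hs).openCover.hom_ext _ _ h

lemma isUnit_linEval_algHom_away (s : Fin (n + 1) → S) (a : Fin (n + 1)) :
    IsUnit (linEval (Pi.single a (1 : A)) (Algebra.algHom A S (Localization.Away (s a)) ∘ s)) := by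
  rw [linEval_single]
  exact IsLocalization.Away.algebraMap_isUnit (s a)

lemma ofCoords_eq_of_eq_smul {u : S} (hu : IsUnit u) {s s' : Fin (n + 1) → S}
    {hs : Ideal.span (Set.range s) = ⊤} {hs' : Ideal.span (Set.range s') = ⊤} (h : s' = u • s) :
    ofCoords A s' hs' = ofCoords A s hs := by
  subst h
  refine spec_hom_ext_of_span_eq_top hs fun a ↦ ?_
  set g := Algebra.algHom A S (Localization.Away (s a))
  have hgs := isUnit_linEval_algHom_away (A := A) s a
  have hgu : g ∘ (u • s) = g u • (g ∘ s) := by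
    ext i
    simp
  have hgus : IsUnit (linEval (Pi.single a (1 : A)) (g ∘ (u • s))) := by
    rw [hgu, linEval_smul]
    exact (hu.map g).mul hgs
  refine (specMap_comp_ofCoords_eq_chartLift _ _ hs' g hgus).trans
    (Eq.trans ?_ (specMap_comp_ofCoords_eq_chartLift _ _ hs g hgs).symm)
  rw [(chartLift_eq_chartLift_iff _ hgus hgs).2 fun i ↦ ?_]
  rw [hgu, linEval_smul, Pi.smul_apply, smul_eq_mul]
  ring

lemma specMap_comp_ofCoords (g : S →ₐ[A] T) {s : Fin (n + 1) → S}
    (hs : Ideal.span (Set.range s) = ⊤) (hgs : Ideal.span (Set.range (g ∘ s)) = ⊤) :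
    specMap (g : S →+* T) ≫ ofCoords A s hs = ofCoords A (g ∘ s) hgs := by
  refine spec_hom_ext_of_span_eq_top hgs fun a ↦ ?_
  have hu := isUnit_linEval_algHom_away (A := A) (g ∘ s) a
  refine Eq.trans ?_ ((specMap_comp_ofCoords_eq_chartLift _ s hs
    ((Algebra.algHom A T (Localization.Away ((g ∘ s) a))).comp g) hu).trans
      (specMap_comp_ofCoords_eq_chartLift _ (g ∘ s) hgs _ hu).symm)
  rw [← Category.assoc, ← specMap_comp]
  rfl

lemma isUnit_iff_basicOpen_eq_top {u : S} : IsUnit u ↔ PrimeSpectrum.basicOpen u = ⊤ := by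
  rw [← Ideal.span_singleton_eq_top, ← Set.range_const (ι := Unit),
    ← PrimeSpectrum.iSup_basicOpen_eq_top_iff, iSup_const]

lemma eq_of_eq_localization_of_span_eq_top {ι : Type} {s : ι → S}
    (hs : Ideal.span (Set.range s) = ⊤) {x y : S}
    (h : ∀ a, algebraMap S (Localization.Away (s a)) x = algebraMap S (Localization.Away (s a)) y) :
    x = y :=
  Module.eq_of_isLocalized_span _ hs (fun a ↦ Localization.Away a.1)
    (fun a ↦ Algebra.linearMap S (Localization.Away a.1)) x y (by rintro ⟨_, a, rfl⟩; exact h a)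

lemma mul_linEval_eq_of_ofCoords_eq {s s' : Fin (n + 1) → S} {hs : Ideal.span (Set.range s) = ⊤}
    {hs' : Ideal.span (Set.range s') = ⊤} (h : ofCoords A s hs = ofCoords A s' hs')
    {c : Fin (n + 1) → A} (hc : IsUnit (linEval c s)) :
    IsUnit (linEval c s') ∧ ∀ i, s i * linEval c s' = s' i * linEval c s := by
  have hc' : IsUnit (linEval c s') := by
    have ho := congrArg (· ⁻¹ᵁ basicOpen c) h
    simp only [ofCoords_preimage_basicOpen] at ho
    exact isUnit_iff_basicOpen_eq_top.2 (ho.symm.trans (isUnit_iff_basicOpen_eq_top.1 hc))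
  refine ⟨hc', (chartLift_eq_chartLift_iff c hc hc').1 ?_⟩
  rw [ofCoords_eq_chartLift c s hs hc, ofCoords_eq_chartLift c s' hs' hc', cancel_mono] at h
  exact AlgHom.coe_ringHom_injective (specMap_injective h)

lemma map_mul_comm_of_ofCoords_eq {s s' : Fin (n + 1) → S} {hs : Ideal.span (Set.range s) = ⊤}
    {hs' : Ideal.span (Set.range s') = ⊤} (h : ofCoords A s hs = ofCoords A s' hs')
    (g : S →ₐ[A] T) {a : Fin (n + 1)} (hu : IsUnit (g (s a))) (i j : Fin (n + 1)) :
    g (s i * s' j) = g (s j * s' i) := by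
  have hg : ofCoords A (g ∘ s) (span_range_comp_eq_top g hs) =
      ofCoords A (g ∘ s') (span_range_comp_eq_top g hs') := by
    rw [← specMap_comp_ofCoords g hs, h, specMap_comp_ofCoords g hs']
  obtain ⟨hu', h'⟩ := mul_linEval_eq_of_ofCoords_eq (c := Pi.single a 1) hg
    (by rwa [linEval_single])
  have hi := h' i
  have hj := h' j
  simp only [linEval_single, Function.comp_apply, map_mul] at hu' hi hj ⊢
  refine (hu.mul hu').mul_right_cancel ?_
  linear_combination g (s' j) * g (s a) * hi - g (s' i) * g (s a) * hj

lemma mul_comm_of_ofCoords_eq {s s' : Fin (n + 1) → S} {hs : Ideal.span (Set.range s) = ⊤}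
    {hs' : Ideal.span (Set.range s') = ⊤} (h : ofCoords A s hs = ofCoords A s' hs')
    (i j : Fin (n + 1)) : s i * s' j = s j * s' i :=
  eq_of_eq_localization_of_span_eq_top hs fun a ↦
    map_mul_comm_of_ofCoords_eq h (Algebra.algHom A S (Localization.Away (s a)))
      (IsLocalization.Away.algebraMap_isUnit (s a)) i j

lemma exists_eq_smul_of_mul_comm {s s' : Fin (n + 1) → S} (hs : Ideal.span (Set.range s) = ⊤)
    (h : ∀ i j, s i * s' j = s j * s' i) : ∃ u : S, s' = u • s := by
  obtain ⟨c, hc⟩ := Ideal.mem_span_range_iff_exists_fun.1 ((Ideal.eq_top_iff_one _).1 hs)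
  refine ⟨∑ i, c i * s' i, funext fun j ↦ ?_⟩
  calc s' j = (∑ i, c i * s i) * s' j := by rw [hc, one_mul]
    _ = (∑ i, c i * s' i) * s j := by
      rw [Finset.sum_mul, Finset.sum_mul]
      exact Finset.sum_congr rfl fun i _ ↦ by linear_combination c i * h i j

lemma exists_eq_smul_of_ofCoords_eq {s s' : Fin (n + 1) → S} {hs : Ideal.span (Set.range s) = ⊤}
    {hs' : Ideal.span (Set.range s') = ⊤} (h : ofCoords A s hs = ofCoords A s' hs') :
    ∃ u : S, IsUnit u ∧ s' = u • s := by
  obtain ⟨u, hu⟩ := exists_eq_smul_of_mul_comm hs (mul_comm_of_ofCoords_eq h)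
  obtain ⟨c, hc⟩ := Ideal.mem_span_range_iff_exists_fun.1 ((Ideal.eq_top_iff_one _).1 hs')
  refine ⟨u, .of_mul_eq_one (∑ i, c i * s i) ?_, hu⟩
  rw [← hc, Finset.mul_sum]
  exact Finset.sum_congr rfl fun i _ ↦ by rw [hu, Pi.smul_apply, smul_eq_mul]; ring

lemma exists_eq_ofCoords (c : Fin (n + 1) → A) (f : Spec (.of S) ⟶ ProjSpace A n)
    (hf : f ≫ structMap A n = specMap (algebraMap A S)) (hc : f ⁻¹ᵁ basicOpen c = ⊤) :
    ∃ (s : Fin (n + 1) → S) (hs : Ideal.span (Set.range s) = ⊤),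
      linEval c s = 1 ∧ f = ofCoords A s hs := by
  have hr : Set.range f ⊆ Set.range (chartι c) := by
    rintro _ ⟨x, rfl⟩
    have hx : x ∈ f ⁻¹ᵁ basicOpen c := hc ▸ trivial
    rwa [← opensRange_chartι] at hx
  obtain ⟨g, rfl⟩ : ∃ g, g ≫ chartι c = f := ⟨_, IsOpenImmersion.lift_fac (chartι c) f hr⟩
  obtain ⟨g, rfl⟩ := Spec.map_surjective g
  rw [Category.assoc, chartι_structMap] at hf
  have hg : g.hom.comp (algebraMap A _) = algebraMap A S :=
    specMap_injective ((specMap_comp _ _).trans hf)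
  let g' : ChartRing c →ₐ[A] S := { g.hom with commutes' := RingHom.congr_fun hg }
  have hl : linEval c (g' ∘ chartCoord c) = 1 := by
    rw [linEval_comp, linEval_chartCoord, map_one]
  have hu : IsUnit (linEval c (g' ∘ chartCoord c)) := hl ▸ isUnit_one
  refine ⟨g' ∘ chartCoord c, span_range_eq_top_of_isUnit_linEval hu, hl, ?_⟩
  rw [ofCoords_eq_chartLift c _ _ hu, chartLift_eq_of_comp]
  rfl

end ProjSpace

/-! ### Base change of projective space -/

section ProjMap

open HomogeneousLocalization

variable {σ τ A B S : Type} [CommRing A] [SetLike σ A] [AddSubgroupClass σ A] {𝒜 : ℕ → σ}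
  [GradedRing 𝒜] [CommRing B] [SetLike τ B] [AddSubgroupClass τ B] {ℬ : ℕ → τ} [GradedRing ℬ]
  [CommRing S] (f : 𝒜 →+*ᵍ ℬ)

lemma awayLift_comp_awayMap (ψ : B →+* S) {t : A} {d : ℕ} (hd : t ∈ 𝒜 d)
    (ht : IsUnit (ψ (f t))) :
    (awayLift ℬ ψ (f t) ht).comp (Away.map f t) = awayLift 𝒜 (ψ.comp (f : A →+* B)) t ht := by
  ext x
  obtain ⟨n, a, ha, rfl⟩ := Away.mk_surjective 𝒜 hd x
  refine (ht.pow n).mul_right_cancel ?_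
  rw [RingHom.comp_apply, Away.map_mk]
  exact (awayLift_mk_mul_pow ℬ ψ ht (f.2 hd) n (f a) (f.2 ha)).trans
    (awayLift_mk_mul_pow 𝒜 (ψ.comp (f : A →+* B)) ht hd n a ha).symm

lemma specMap_comp_specToProj_comp_map {T : Type} [CommRing T]
    (hf : HomogeneousIdeal.irrelevant ℬ ≤ (HomogeneousIdeal.irrelevant 𝒜).map f) (φ : B →+* S)
    (hφ : (HomogeneousIdeal.irrelevant ℬ).toIdeal.map φ = ⊤) (g : S →+* T) {t : A} {d : ℕ}
    (hd₀ : 0 < d) (hd : t ∈ 𝒜 d) (ht : IsUnit (g (φ (f t)))) :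
    specMap g ≫ specToProj ℬ φ hφ ≫ Proj.map f hf =
      specMap (awayLift 𝒜 ((g.comp φ).comp (f : A →+* B)) t ht) ≫ Proj.awayι 𝒜 t hd hd₀ := by
  rw [← Category.assoc, specMap_comp_specToProj ℬ φ hφ g (t := f t) hd₀ (f.2 hd) ht, Category.assoc,
    Proj.awayι_comp_map f hf hd₀ t hd, ← awayLift_comp_awayMap f (g.comp φ) hd ht, specMap_comp,
    Category.assoc]

end ProjMap

namespace ProjSpace

open MvPolynomial HomogeneousLocalization

section Map

variable (A B : Type) [CommRing A] [CommRing B] [Algebra A B] (n : ℕ)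

/-- Extension of scalars `A[X₀, …, Xₙ] →+* B[X₀, …, Xₙ]`, as a homomorphism of graded rings. -/
def gradingMap : grading A n →+*ᵍ grading B n where
  __ := MvPolynomial.map (algebraMap A B)
  map_mem h := IsHomogeneous.map h _

lemma irrelevant_le_map_gradingMap :
    HomogeneousIdeal.irrelevant (grading B n) ≤
      (HomogeneousIdeal.irrelevant (grading A n)).map (gradingMap A B n) := by
  refine (HomogeneousIdeal.toIdeal_irrelevant_le _).2 fun d hd p (hp : p.IsHomogeneous d) ↦ ?_
  have hX : p ∈ Ideal.span (X '' Set.univ) := mem_ideal_span_X_image.2 fun m hm ↦ by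
    by_contra! h
    have hm₀ : m = 0 := Finsupp.ext fun i ↦ h i trivial
    have := hp (mem_support_iff.1 hm)
    rw [hm₀, map_zero] at this
    exact hd.ne this
  refine Ideal.span_le.2 ?_ hX
  rintro _ ⟨i, -, rfl⟩
  have hi := Ideal.mem_map_of_mem (gradingMap A B n)
    (HomogeneousIdeal.mem_irrelevant_of_mem (grading A n) one_pos (X_mem_grading A i))
  rwa [show gradingMap A B n (X i) = X i from map_X _ _] at hi

/-- The projection `ℙⁿ_B ⟶ ℙⁿ_A` for an `A`-algebra `B`. -/
def map : ProjSpace B n ⟶ ProjSpace A n :=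
  Proj.map (gradingMap A B n) (irrelevant_le_map_gradingMap A B n)

end Map

variable {A B : Type} [CommRing A] [CommRing B] [Algebra A B] {n : ℕ}
  {S : Type} [CommRing S] [Algebra A S] [Algebra B S] [IsScalarTower A B S]

lemma linEval_algebraMap_comp (c : Fin (n + 1) → A) (s : Fin (n + 1) → S) :
    linEval (algebraMap A B ∘ c) s = linEval c s := by
  simp [linEval]

lemma map_preimage_basicOpen (c : Fin (n + 1) → A) :
    map A B n ⁻¹ᵁ basicOpen c = basicOpen (algebraMap A B ∘ c) := by
  refine (Proj.map_preimage_basicOpen _ _ _).trans ?_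
  refine congrArg (Proj.basicOpen (grading B n)) ?_
  change MvPolynomial.map (algebraMap A B) (linForm A c) = _
  simp only [linForm, smul_eq_C_mul, map_sum, map_mul, map_C, map_X, Function.comp_apply]

lemma ofCoords_map (s : Fin (n + 1) → S) (hs : Ideal.span (Set.range s) = ⊤) :
    ofCoords B s hs ≫ map A B n = ofCoords A s hs := by
  refine spec_hom_ext_of_span_eq_top hs fun a ↦ ?_
  have hu : IsUnit (algebraMap S (Localization.Away (s a)) (s a)) :=
    IsLocalization.Away.algebraMap_isUnit (s a)
  have hcomp : (eval₂Hom (algebraMap B S) s).comp (MvPolynomial.map (algebraMap A B)) =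
      eval₂Hom (algebraMap A S) s := by
    ext <;> simp [← IsScalarTower.algebraMap_apply]
  refine (specMap_comp_specToProj_comp_map (gradingMap A B n) (irrelevant_le_map_gradingMap A B n)
    (eval₂Hom (algebraMap B S) s) (map_eval₂Hom_irrelevant B hs) _ one_pos (X_mem_grading A a)
    ?_).trans (Eq.trans ?_ (specMap_comp_specToProj (grading A n) _ (map_eval₂Hom_irrelevant A hs)
      _ one_pos (X_mem_grading A a) ?_).symm)
  · change IsUnit (algebraMap _ _ (eval₂Hom _ _ (MvPolynomial.map _ _)))
    simpa
  · refine congrArg (· ≫ Proj.awayι (grading A n) (X a) (X_mem_grading A a) one_pos) ?_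
    congr 2
    rw [← hcomp]
    rfl
  · simpa

/-- The standard affine cover of `ℙⁿ_A`. -/
def chartCover (A : Type) [CommRing A] (n : ℕ) : (ProjSpace A n).AffineOpenCover where
  I₀ := Fin (n + 1)
  X i := .of (ChartRing (Pi.single i (1 : A)))
  f i := chartι (Pi.single i 1)
  idx x := (TopologicalSpace.Opens.mem_iSup.1 (iSup_basicOpen_single.ge (Set.mem_univ x))).choose
  covers x := by
    rw [← Scheme.Hom.coe_opensRange, opensRange_chartι]
    exact (TopologicalSpace.Opens.mem_iSup.1
      (iSup_basicOpen_single.ge (Set.mem_univ x))).choose_spec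

lemma chartι_map (c : Fin (n + 1) → B) [Algebra A (ChartRing c)]
    [IsScalarTower A B (ChartRing c)] (hc : Ideal.span (Set.range (chartCoord c)) = ⊤) :
    chartι c ≫ map A B n = ofCoords A (chartCoord c) hc := by
  rw [chartι_eq_ofCoords, ofCoords_map]

lemma span_range_chartCoord (c : Fin (n + 1) → A) : Ideal.span (Set.range (chartCoord c)) = ⊤ :=
  span_range_eq_top_of_isUnit_linEval (c := c) (linEval_chartCoord c ▸ isUnit_one)

lemma map_structMap : map A B n ≫ structMap A n = structMap B n ≫ specMap (algebraMap A B) := by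
  refine (chartCover B n).openCover.hom_ext _ _ fun i ↦ ?_
  let c : Fin (n + 1) → B := Pi.single i 1
  change chartι c ≫ _ = chartι c ≫ _
  let _ : Algebra A (ChartRing c) := Algebra.compHom _ (algebraMap A B)
  have _ : IsScalarTower A B (ChartRing c) := .of_algebraMap_eq fun _ ↦ rfl
  rw [← Category.assoc, ← Category.assoc, chartι_map c (span_range_chartCoord c),
    ofCoords_structMap, chartι_structMap, ← specMap_comp, ← IsScalarTower.algebraMap_eq]

lemma isPullback_specMap_of_existsUnique {A B C D : Type} [CommRing A] [CommRing B] [CommRing C]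
    [CommRing D] {f : A →+* B} {g : A →+* C} {f' : B →+* D} {g' : C →+* D}
    (h : f'.comp f = g'.comp g)
    (H : ∀ (S : Type) [CommRing S] (b : B →+* S) (c : C →+* S), b.comp f = c.comp g →
      ∃! d : D →+* S, d.comp f' = b ∧ d.comp g' = c) :
    IsPullback (specMap f') (specMap g') (specMap f) (specMap g) := by
  have w : CommRingCat.ofHom f ≫ CommRingCat.ofHom f' =
      CommRingCat.ofHom g ≫ CommRingCat.ofHom g' := CommRingCat.hom_ext h
  choose d hd using fun s : PushoutCocone (CommRingCat.ofHom f) (CommRingCat.ofHom g) ↦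
    H s.pt s.inl.hom s.inr.hom (congrArg CommRingCat.Hom.hom s.condition)
  refine isPullback_SpecMap_of_isPushout _ _ _ _ ⟨⟨w⟩, ⟨PushoutCocone.IsColimit.mk w
    (fun s ↦ CommRingCat.ofHom (d s)) ?_ ?_ ?_⟩⟩
  · exact fun s ↦ CommRingCat.hom_ext (hd s).1.1
  · exact fun s ↦ CommRingCat.hom_ext (hd s).1.2
  · exact fun s m hl hr ↦ CommRingCat.hom_ext
      ((hd s).2 m.hom ⟨congrArg CommRingCat.Hom.hom hl, congrArg CommRingCat.Hom.hom hr⟩)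

lemma chartLift_chartCoord {c : Fin (n + 1) → A} {s : Fin (n + 1) → S} (hs : linEval c s = 1)
    (hu : IsUnit (linEval c s)) (i : Fin (n + 1)) : chartLift c s hu (chartCoord c i) = s i := by
  simpa [hs] using chartLift_chartCoord_mul c s hu i

lemma existsUnique_chartRing_hom {c : Fin (n + 1) → A} {c' : Fin (n + 1) → B}
    (hc : algebraMap A B ∘ c = c') (g : ChartRing c →ₐ[A] S) :
    ∃! d : ChartRing c' →ₐ[B] S, d ∘ chartCoord c' = g ∘ chartCoord c := by
  have hg : linEval c' (g ∘ chartCoord c) = 1 := by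
    rw [← hc, linEval_algebraMap_comp, linEval_comp, linEval_chartCoord, map_one]
  have hu : IsUnit (linEval c' (g ∘ chartCoord c)) := hg ▸ isUnit_one
  exact ⟨chartLift c' _ hu, funext (chartLift_chartCoord hg hu),
    fun d hd ↦ chartRing_hom_ext (hd.trans (funext (chartLift_chartCoord hg hu)).symm)⟩

lemma isPullback_chart {c : Fin (n + 1) → A} {c' : Fin (n + 1) → B}
    (hc : algebraMap A B ∘ c = c') [Algebra A (ChartRing c')] [IsScalarTower A B (ChartRing c')]
    {f : ChartRing c →ₐ[A] ChartRing c'} (hf : f ∘ chartCoord c = chartCoord c') :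
    IsPullback (specMap (f : _ →+* ChartRing c')) (specMap (algebraMap B (ChartRing c')))
      (specMap (algebraMap A (ChartRing c))) (specMap (algebraMap A B)) := by
  refine isPullback_specMap_of_existsUnique ?_ fun S _ b b' h ↦ ?_
  · exact f.comp_algebraMap.trans (IsScalarTower.algebraMap_eq A B _)
  let _ : Algebra B S := b'.toAlgebra
  let _ : Algebra A S := (b'.comp (algebraMap A B)).toAlgebra
  have _ : IsScalarTower A B S := .of_algebraMap_eq fun _ ↦ rfl
  let g : ChartRing c →ₐ[A] S := { b with commutes' := RingHom.congr_fun h }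
  obtain ⟨d, hd, hd'⟩ := existsUnique_chartRing_hom hc g
  refine ⟨d, ⟨?_, d.comp_algebraMap⟩, fun e ⟨he, he'⟩ ↦ ?_⟩
  · have hdf : (d.restrictScalars A).comp f = g := chartRing_hom_ext <| by
      rw [AlgHom.coe_comp, Function.comp_assoc, hf]
      exact hd
    exact congrArg AlgHom.toRingHom hdf
  · let e' : ChartRing c' →ₐ[B] S := { e with commutes' := RingHom.congr_fun he' }
    refine congrArg AlgHom.toRingHom (hd' e' (funext fun i ↦ ?_))
    rw [← hf]
    exact RingHom.congr_fun he _

lemma exists_isPullback_chart (c : Fin (n + 1) → A) :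
    ∃ g, g ≫ chartι c = chartι (algebraMap A B ∘ c) ≫ map A B n ∧
      IsPullback g (specMap (algebraMap B (ChartRing (algebraMap A B ∘ c))))
        (specMap (algebraMap A (ChartRing c))) (specMap (algebraMap A B)) := by
  let _ : Algebra A (ChartRing (algebraMap A B ∘ c)) := Algebra.compHom _ (algebraMap A B)
  have _ : IsScalarTower A B (ChartRing (algebraMap A B ∘ c)) := .of_algebraMap_eq fun _ ↦ rfl
  have h : linEval c (chartCoord (algebraMap A B ∘ c)) = 1 := by
    rw [← linEval_algebraMap_comp (B := B), linEval_chartCoord]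
  have hu : IsUnit (linEval c (chartCoord (algebraMap A B ∘ c))) := h ▸ isUnit_one
  refine ⟨_, ?_, isPullback_chart rfl (funext (chartLift_chartCoord h hu))⟩
  rw [chartι_map _ (span_range_chartCoord _), ofCoords_eq_chartLift c _ _ hu]

lemma isPullback_map : IsPullback (map A B n) (structMap B n) (structMap A n)
    (specMap (algebraMap A B)) := by
  refine Scheme.isPullback_of_openCover _ _ _ _ (chartCover A n).openCover fun i ↦ ?_
  obtain ⟨g, hgι, hg⟩ := exists_isPullback_chart (B := B) (Pi.single i (1 : A))
  have h := (IsOpenImmersion.isPullback g (chartι _) (chartι (Pi.single i 1)) (map A B n)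
    hgι.symm (by rw [opensRange_chartι, opensRange_chartι, map_preimage_basicOpen])).flip
  refine hg.of_iso h.isoPullback (.refl _) (.refl _) (.refl _) ?_ ?_ ?_ ?_
  · exact (Category.comp_id _).trans h.isoPullback_hom_snd.symm
  · refine (Category.comp_id _).trans (Eq.trans ?_ (Category.assoc _ _ _))
    refine Eq.trans ?_ (congrArg (· ≫ structMap B n) h.isoPullback_hom_fst).symm
    exact (chartι_structMap _).symm
  · refine (Category.comp_id _).trans (Eq.trans ?_ (Category.id_comp _).symm)
    exact (chartι_structMap _).symm
  · exact (Category.comp_id _).trans (Category.id_comp _).symm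

end ProjSpace

lemma QuasiProjectiveOver.baseChange {A B : Type} [CommRing A] [CommRing B] [Algebra A B]
    {X X' : Scheme.{0}} {p : X ⟶ Spec (.of A)} {p' : X' ⟶ Spec (.of B)} {f : X' ⟶ X}
    (h : IsPullback f p' p (specMap (algebraMap A B))) (hp : QuasiProjectiveOver A p) :
    QuasiProjectiveOver B p' := by
  obtain ⟨n, i, hi, rfl⟩ := hp
  let i' : X' ⟶ ProjSpace B n := ProjSpace.isPullback_map.lift (f ≫ i) p' (by simpa using h.w)
  have h' : IsPullback f i' i (ProjSpace.map A B n) :=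
    .of_bot (by simpa [i'] using h) (ProjSpace.isPullback_map.lift_fst _ _ _).symm
      ProjSpace.isPullback_map
  exact ⟨n, i', MorphismProperty.of_isPullback h' hi, ProjSpace.isPullback_map.lift_snd _ _ _⟩

/-! ### Norms and traces along a finite Galois extension -/

section GaloisTensor

open TensorProduct ProjSpace

attribute [local instance] Algebra.TensorProduct.rightAlgebra

variable {k L R R' : Type} [Field k] [Field L] [Algebra k L] [CommRing R] [Algebra k R]
  [CommRing R'] [Algebra k R']

/-- The action of an automorphism of `L` over `k` on `R ⊗[k] L` through the second factor. -/
def galAct (R : Type) [CommRing R] [Algebra k R] (σ : L ≃ₐ[k] L) : R ⊗[k] L →ₐ[R] R ⊗[k] L :=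
  Algebra.TensorProduct.map (AlgHom.id R R) (σ : L →ₐ[k] L)

/-- The base change `R ⊗[k] L →ₐ[L] R' ⊗[k] L` of a homomorphism of `k`-algebras. -/
def extendScalars (L : Type) [Field L] [Algebra k L] (g : R →ₐ[k] R') :
    R ⊗[k] L →ₐ[L] R' ⊗[k] L where
  __ := Algebra.TensorProduct.map g (AlgHom.id k L)
  commutes' x := (Algebra.TensorProduct.map_tmul _ _ _ _).trans (by rw [map_one]; rfl)

lemma extendScalars_tmul (g : R →ₐ[k] R') (r : R) (x : L) :
    extendScalars L g (r ⊗ₜ x) = g r ⊗ₜ x :=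
  rfl

lemma galAct_tmul (σ : L ≃ₐ[k] L) (r : R) (x : L) : galAct R σ (r ⊗ₜ x) = r ⊗ₜ σ x :=
  rfl

lemma galAct_one (w : R ⊗[k] L) : galAct R 1 w = w :=
  DFunLike.congr_fun (Algebra.TensorProduct.map_id (R := k) (S := R) (A := R) (B := L)) w

lemma galAct_galAct (σ τ : L ≃ₐ[k] L) (w : R ⊗[k] L) :
    galAct R σ (galAct R τ w) = galAct R (σ * τ) w := by
  induction w with
  | zero => simp only [map_zero]
  | add v w hv hw => rw [map_add, map_add, map_add, hv, hw]
  | tmul r x => rfl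

lemma extendScalars_galAct (g : R →ₐ[k] R') (σ : L ≃ₐ[k] L) (w : R ⊗[k] L) :
    extendScalars L g (galAct R σ w) = galAct R' σ (extendScalars L g w) := by
  induction w with
  | zero => simp only [map_zero]
  | add v w hv hw => rw [map_add, map_add, map_add, map_add, hv, hw]
  | tmul r x => rfl

lemma algebraMap_tensor_injective : Function.Injective (algebraMap R (R ⊗[k] L)) :=
  Algebra.TensorProduct.includeLeft_injective (S := R) (algebraMap k L).injective

variable [FiniteDimensional k L]

lemma trace_tmul (r : R) (x : L) :
    Algebra.trace R (R ⊗[k] L) (r ⊗ₜ x) = Algebra.trace k L x • r := by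
  have h : Algebra.lmul R (R ⊗[k] L) (1 ⊗ₜ x) = (Algebra.lmul k L x).baseChange R := by
    ext; simp
  rw [← mul_one r, ← smul_eq_mul, ← TensorProduct.smul_tmul', map_smul, Algebra.trace_apply, h,
    LinearMap.trace_baseChange, ← Algebra.trace_apply, smul_eq_mul, smul_eq_mul, mul_one, mul_comm,
    Algebra.smul_def]

lemma trace_extendScalars (g : R →ₐ[k] R') (w : R ⊗[k] L) :
    Algebra.trace R' (R' ⊗[k] L) (extendScalars L g w) = g (Algebra.trace R (R ⊗[k] L) w) := by
  induction w with
  | zero => simp only [map_zero]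
  | add v w hv hw => rw [map_add, map_add, map_add, map_add, hv, hw]
  | tmul r x => rw [extendScalars_tmul, trace_tmul, trace_tmul, map_smul]

lemma sum_traceDual_smul_trace [Algebra.IsSeparable k L] {ι : Type} [Fintype ι] [DecidableEq ι]
    (b : Module.Basis ι k L) (w : R ⊗[k] L) :
    ∑ j, b.traceDual j • algebraMap R (R ⊗[k] L) (Algebra.trace R (R ⊗[k] L) (b j • w)) = w := by
  induction w with
  | zero => simp only [smul_zero, map_zero, Finset.sum_const_zero]
  | add v w hv hw => simp only [smul_add, map_add, Finset.sum_add_distrib, hv, hw]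
  | tmul r x =>
    have h (j : ι) : b.traceDual j • algebraMap R (R ⊗[k] L) (Algebra.trace R _ (b j • r ⊗ₜ[k] x)) =
        r ⊗ₜ (b.traceDual.repr x j • b.traceDual j) := by
      rw [Algebra.smul_def, Algebra.smul_def, Algebra.TensorProduct.right_algebraMap_apply,
        Algebra.TensorProduct.right_algebraMap_apply, Algebra.TensorProduct.tmul_mul_tmul, one_mul,
        trace_tmul, b.traceDual_repr_apply, Algebra.traceForm_apply, mul_comm x,
        Algebra.TensorProduct.algebraMap_apply, Algebra.algebraMap_self_apply,
        Algebra.TensorProduct.tmul_mul_tmul, one_mul, mul_one, TensorProduct.smul_tmul]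
    rw [Finset.sum_congr rfl fun j _ ↦ h j, ← TensorProduct.tmul_sum, b.traceDual.sum_repr]

lemma algebraMap_trace_eq_sum_galAct [IsGalois k L] (w : R ⊗[k] L) :
    algebraMap R _ (Algebra.trace R (R ⊗[k] L) w) = ∑ σ : L ≃ₐ[k] L, galAct R σ w := by
  induction w with
  | zero => simp only [map_zero, Finset.sum_const_zero]
  | add v w hv hw => simp only [map_add, hv, hw, Finset.sum_add_distrib]
  | tmul r x =>
    rw [trace_tmul, Algebra.TensorProduct.algebraMap_apply, Algebra.algebraMap_self_apply,
      TensorProduct.smul_tmul, ← Algebra.algebraMap_eq_smul_one, trace_eq_sum_automorphisms,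
      TensorProduct.tmul_sum]
    rfl

lemma exists_algebraMap_eq_of_galAct_eq [IsGalois k L] {w : R ⊗[k] L}
    (hw : ∀ σ : L ≃ₐ[k] L, galAct R σ w = w) : ∃ r, algebraMap R _ r = w := by
  obtain ⟨x, hx⟩ := Algebra.trace_surjective k L 1
  refine ⟨Algebra.trace R _ ((1 ⊗ₜ[k] x) * w), ?_⟩
  rw [algebraMap_trace_eq_sum_galAct]
  simp only [map_mul, hw, galAct_tmul, ← Finset.sum_mul, ← TensorProduct.tmul_sum]
  rw [← trace_eq_sum_automorphisms, hx, map_one, ← Algebra.TensorProduct.one_def, one_mul]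

lemma exists_algebraMap_eq_prod_galAct [IsGalois k L] (w : R ⊗[k] L) :
    ∃ r, algebraMap R _ r = ∏ σ : L ≃ₐ[k] L, galAct R σ w :=
  exists_algebraMap_eq_of_galAct_eq fun τ ↦ by
    rw [map_prod]
    exact Fintype.prod_equiv (Equiv.mulLeft τ) _ _ fun σ ↦ galAct_galAct τ σ w

lemma exists_isUnit_algebraMap_eq_prod_galAct [IsGalois k L] {u : R ⊗[k] L} (hu : IsUnit u) :
    ∃ r, IsUnit r ∧ algebraMap R _ r = ∏ σ : L ≃ₐ[k] L, galAct R σ u := by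
  obtain ⟨u, rfl⟩ := hu
  obtain ⟨r, hr⟩ := exists_algebraMap_eq_prod_galAct (u : R ⊗[k] L)
  obtain ⟨r', hr'⟩ := exists_algebraMap_eq_prod_galAct (↑u⁻¹ : R ⊗[k] L)
  refine ⟨r, .of_mul_eq_one r' (algebraMap_tensor_injective (k := k) (L := L) ?_), hr⟩
  rw [map_mul, hr, hr', ← Finset.prod_mul_distrib, map_one]
  exact Finset.prod_eq_one fun σ _ ↦ by rw [← map_mul, Units.mul_inv, map_one]

section TwistedProd

variable {n : ℕ}

/-- The product `∏ σ, σ (s (I σ))` of Galois conjugates of coordinates, one for each `σ`. -/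
def twistedProd (s : Fin (n + 1) → R ⊗[k] L) (I : (L ≃ₐ[k] L) → Fin (n + 1)) : R ⊗[k] L :=
  ∏ σ, galAct R σ (s (I σ))

lemma twistedProd_extendScalars (g : R →ₐ[k] R') (s : Fin (n + 1) → R ⊗[k] L)
    (I : (L ≃ₐ[k] L) → Fin (n + 1)) :
    twistedProd (extendScalars L g ∘ s) I = extendScalars L g (twistedProd s I) := by
  simp only [twistedProd, map_prod, extendScalars_galAct, Function.comp_apply]

lemma twistedProd_smul (u : R ⊗[k] L) (s : Fin (n + 1) → R ⊗[k] L)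
    (I : (L ≃ₐ[k] L) → Fin (n + 1)) :
    twistedProd (u • s) I = (∏ σ, galAct R σ u) * twistedProd s I := by
  simp only [twistedProd, Pi.smul_apply, smul_eq_mul, map_mul, Finset.prod_mul_distrib]

lemma exists_twistedProd_update_eq [DecidableEq (L ≃ₐ[k] L)] (s : Fin (n + 1) → R ⊗[k] L)
    (I : (L ≃ₐ[k] L) → Fin (n + 1)) :
    ∃ P, ∀ i, twistedProd s (Function.update I 1 i) = P * s i := by
  refine ⟨∏ σ ∈ Finset.univ.erase 1, galAct R σ (s (I σ)), fun i ↦ ?_⟩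
  rw [twistedProd, ← Finset.prod_erase_mul _ _ (Finset.mem_univ 1), Function.update_self,
    galAct_one]
  congr 1
  refine Finset.prod_congr rfl fun σ hσ ↦ ?_
  rw [Function.update_of_ne (Finset.ne_of_mem_erase hσ)]

lemma span_range_twistedProd {s : Fin (n + 1) → R ⊗[k] L} (hs : Ideal.span (Set.range s) = ⊤) :
    Ideal.span (Set.range (twistedProd s)) = ⊤ := by
  classical
  obtain ⟨c, hc⟩ := Ideal.mem_span_range_iff_exists_fun.1 ((Ideal.eq_top_iff_one _).1 hs)
  have h : (1 : R ⊗[k] L) = ∏ σ : L ≃ₐ[k] L, ∑ i, galAct R σ (c i) * galAct R σ (s i) := by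
    simp only [← map_mul, ← map_sum, hc, map_one, Finset.prod_const_one]
  rw [Ideal.eq_top_iff_one, h, Finset.prod_univ_sum]
  refine Ideal.sum_mem _ fun I _ ↦ ?_
  rw [Finset.prod_mul_distrib]
  exact Ideal.mul_mem_left _ _ (Ideal.subset_span ⟨I, rfl⟩)

variable (k L n) in
/-- One less than the number of coordinates in `traceCoords`. -/
def traceDim : ℕ :=
  Nat.card (((L ≃ₐ[k] L) → Fin (n + 1)) × Fin (Module.finrank k L)) - 1

variable (k L n) in
/-- An enumeration of the index set of `traceCoords`, so that `ProjSpace k (traceDim k L n)` is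
available as a target. -/
def traceIndex : Fin (traceDim k L n + 1) ≃
    ((L ≃ₐ[k] L) → Fin (n + 1)) × Fin (Module.finrank k L) :=
  have : Nonempty (Fin (Module.finrank k L)) := ⟨⟨0, Module.finrank_pos⟩⟩
  (finCongr (Nat.sub_add_cancel Nat.card_pos)).trans (Finite.equivFin _).symm

/-- The traces `Tr (bⱼ · ∏ σ, σ (s (I σ)))`, for `bⱼ` running through a basis of `L` over `k`.
They are the coordinates over `R` of the descended morphism, when `s` are those over `R ⊗[k] L`. -/
def traceCoords (s : Fin (n + 1) → R ⊗[k] L) (a : Fin (traceDim k L n + 1)) : R :=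
  Algebra.trace R (R ⊗[k] L)
    (Module.finBasis k L (traceIndex k L n a).2 • twistedProd s (traceIndex k L n a).1)

lemma traceCoords_extendScalars (g : R →ₐ[k] R') (s : Fin (n + 1) → R ⊗[k] L) :
    traceCoords (extendScalars L g ∘ s) = g ∘ traceCoords s := by
  funext a
  rw [traceCoords, twistedProd_extendScalars, ← map_smul, trace_extendScalars]
  rfl

lemma exists_traceCoords_smul_eq [IsGalois k L] {u : R ⊗[k] L} (hu : IsUnit u)
    (s : Fin (n + 1) → R ⊗[k] L) :
    ∃ v : R, IsUnit v ∧ traceCoords (u • s) = v • traceCoords s := by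
  obtain ⟨v, hv, hvu⟩ := exists_isUnit_algebraMap_eq_prod_galAct hu
  refine ⟨v, hv, funext fun a ↦ ?_⟩
  rw [traceCoords, twistedProd_smul, ← hvu, ← Algebra.smul_def, smul_comm, map_smul]
  rfl

/-- The coefficients of the linear form over `L` that recovers `twistedProd s I` from
`traceCoords s`. -/
def untraceForm [Algebra.IsSeparable k L] (I : (L ≃ₐ[k] L) → Fin (n + 1))
    (a : Fin (traceDim k L n + 1)) : L :=
  open Classical in
  if (traceIndex k L n a).1 = I then (Module.finBasis k L).traceDual (traceIndex k L n a).2 else 0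

lemma linEval_untraceForm [Algebra.IsSeparable k L] (s : Fin (n + 1) → R ⊗[k] L)
    (I : (L ≃ₐ[k] L) → Fin (n + 1)) :
    linEval (untraceForm I) (algebraMap R _ ∘ traceCoords s) = twistedProd s I := by
  classical
  rw [linEval, ← (traceIndex k L n).symm.sum_comp, Fintype.sum_prod_type, Fintype.sum_eq_single I]
  · simpa only [untraceForm, traceCoords, Function.comp_apply, Equiv.apply_symm_apply, if_true]
      using sum_traceDual_smul_trace (Module.finBasis k L) (twistedProd s I)
  · intro J hJ
    refine Finset.sum_eq_zero fun j _ ↦ ?_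
    rw [untraceForm, Equiv.apply_symm_apply, if_neg hJ, zero_smul]

lemma span_range_traceCoords [Algebra.IsSeparable k L] {s : Fin (n + 1) → R ⊗[k] L}
    (hs : Ideal.span (Set.range s) = ⊤) : Ideal.span (Set.range (traceCoords s)) = ⊤ := by
  have h : (Ideal.span (Set.range (traceCoords s))).map (algebraMap R (R ⊗[k] L)) = ⊤ := by
    rw [Ideal.map_span, ← Set.range_comp, eq_top_iff, ← span_range_twistedProd hs, Ideal.span_le]
    rintro _ ⟨I, rfl⟩
    rw [← linEval_untraceForm]
    exact linEval_mem_span _ _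
  rw [← Ideal.comap_map_eq_self_of_faithfullyFlat (B := R ⊗[k] L) (Ideal.span _), h,
    Ideal.comap_top]

end TwistedProd

end GaloisTensor

/-! ### Locality and flat descent of immersions -/

section Immersion

variable {X Y Z : Scheme.{0}}

lemma isImmersion_of_forall_exists_pullback_snd (f : X ⟶ Z)
    (H : ∀ x, ∃ (W : Scheme.{0}) (j : W ⟶ Z) (_ : IsOpenImmersion j),
      f x ∈ j.opensRange ∧ IsImmersion (pullback.snd f j)) : IsImmersion f := by
  choose W j _ hx hj using H
  have : MorphismProperty.RespectsRight @IsImmersion @IsOpenImmersion :=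
    ⟨fun i hi f hf ↦ by
      have : IsImmersion f := hf
      have : IsOpenImmersion i := hi
      exact inferInstanceAs (IsImmersion (f ≫ i))⟩
  have : MorphismProperty.RespectsIso @IsImmersion :=
    IsImmersion.isStableUnderBaseChange.respectsIso
  refine IsZariskiLocalAtTarget.of_range_subset_iSup (P := @IsImmersion)
    (fun x ↦ (j x).opensRange) ?_ fun x ↦
      (MorphismProperty.arrow_mk_iso_iff @IsImmersion (morphismRestrictOpensRange f (j x))).2 (hj x)
  rintro _ ⟨x, rfl⟩
  exact TopologicalSpace.Opens.mem_iSup.2 ⟨x, hx x⟩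

variable {Y' Z' : Scheme.{0}} {p' : Y' ⟶ Y} {f' : Y' ⟶ Z'} {f : Y ⟶ Z} {p : Z' ⟶ Z}

lemma preimage_range_of_isPullback (H : IsPullback p' f' f p) :
    p ⁻¹' Set.range f = Set.range f' := by
  ext z
  constructor
  · rintro ⟨y, hy⟩
    obtain ⟨w, -, hw⟩ := Scheme.exists_preimage_of_isPullback H y z hy
    exact ⟨w, hw⟩
  · rintro ⟨w, rfl⟩
    exact ⟨p' w, congr($(H.w) w)⟩

lemma mono_of_isPullback (H : IsPullback p' f' f p) [Surjective p] [Flat p] [QuasiCompact p]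
    [Mono f'] : Mono f := by
  have hp : (@Surjective ⊓ @Flat ⊓ @QuasiCompact : MorphismProperty Scheme.{0}) p :=
    ⟨⟨inferInstance, inferInstance⟩, inferInstance⟩
  have : (@Surjective ⊓ @Flat ⊓ @QuasiCompact :
      MorphismProperty Scheme.{0}).IsStableUnderBaseChange :=
    ⟨fun sq h ↦ ⟨⟨MorphismProperty.of_isPullback sq h.1.1, MorphismProperty.of_isPullback sq h.1.2⟩,
      MorphismProperty.of_isPullback sq h.2⟩⟩
  have hf : (MorphismProperty.isomorphisms Scheme).diagonal f :=
    MorphismProperty.of_isPullback_of_descendsAlong H.flip hp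
      (by rw [MorphismProperty.diagonal_isomorphisms]; exact (inferInstance : Mono f'))
  rwa [MorphismProperty.diagonal_isomorphisms] at hf

lemma isClosedImmersion_of_isPullback (H : IsPullback p' f' f p) [Surjective p] [Flat p]
    [QuasiCompact p] [IsClosedImmersion f'] : IsClosedImmersion f := by
  have hp : (@Surjective ⊓ @Flat ⊓ @QuasiCompact : MorphismProperty Scheme.{0}) p :=
    ⟨⟨inferInstance, inferInstance⟩, inferInstance⟩
  have : Mono f := mono_of_isPullback H
  have : UniversallyClosed f := MorphismProperty.of_isPullback_of_descendsAlong
    (P := @UniversallyClosed) H.flip hp inferInstance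
  have : LocallyOfFiniteType f := MorphismProperty.of_isPullback_of_descendsAlong
    (P := @LocallyOfFiniteType) H.flip hp inferInstance
  exact (IsClosedImmersion.iff_isProper_and_mono f).2 ⟨{}, ‹_›⟩

lemma coborderRange_eq_preimage (H : IsPullback p' f' f p) [UniversallyOpen p] [IsImmersion f']
    {U : Z.Opens} (hU : U = coborder (Set.range f)) : f'.coborderRange = p ⁻¹ᵁ U := by
  ext1
  rw [Scheme.Hom.coe_preimage, hU, ← coborder_preimage p.isOpenMap p.continuous,
    preimage_range_of_isPullback H]
  rfl

lemma isOpen_coborder_range_of_isPullback (H : IsPullback p' f' f p) [Surjective p]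
    [UniversallyOpen p] [IsImmersion f'] : IsOpen (coborder (Set.range f)) := by
  rw [← (p.isOpenMap.isQuotientMap p.continuous p.surjective).isOpen_preimage,
    ← coborder_preimage p.isOpenMap p.continuous, preimage_range_of_isPullback H]
  exact f'.isLocallyClosed_range.isOpen_coborder

theorem isImmersion_of_isPullback (H : IsPullback p' f' f p) [Surjective p] [Flat p]
    [QuasiCompact p] [UniversallyOpen p] [IsImmersion f'] : IsImmersion f := by
  obtain ⟨U, hU⟩ : ∃ U : Z.Opens, U = coborder (Set.range f) :=
    ⟨⟨_, isOpen_coborder_range_of_isPullback H⟩, rfl⟩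
  obtain ⟨l, rfl⟩ : ∃ l, l ≫ U.ι = f := ⟨_, IsOpenImmersion.lift_fac U.ι f
    (by rw [Scheme.Opens.range_ι, hU]; exact subset_coborder)⟩
  obtain ⟨l', hl', _⟩ : ∃ l', l' ≫ (p ⁻¹ᵁ U).ι = f' ∧ IsClosedImmersion l' := by
    rw [← coborderRange_eq_preimage H hU]
    exact ⟨_, f'.liftCoborder_ι, inferInstance⟩
  have hU' := isPullback_morphismRestrict p U
  have H' : IsPullback p' l' l (p ∣_ U) :=
    .of_bot (hl' ▸ H) (by
      rw [← cancel_mono U.ι, Category.assoc, H.w, Category.assoc, hU'.w, ← hl', Category.assoc]) hU'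
  have : Surjective (p ∣_ U) := MorphismProperty.of_isPullback (P := @Surjective) hU'.flip ‹_›
  have := isClosedImmersion_of_isPullback H'
  infer_instance

end Immersion

/-! ### Morphisms to projective space from local coordinates -/

section Glue

variable {A S T : Type} [CommRing A] [CommRing S] [CommRing T]

lemma exists_algebra_eq_specMap (a : Spec (.of S) ⟶ Spec (.of A)) :
    ∃ _ : Algebra A S, a = specMap (algebraMap A S) := by
  obtain ⟨φ, rfl⟩ := Spec.map_surjective a
  exact ⟨φ.hom.toAlgebra, rfl⟩

lemma exists_algHom_eq_specMap [Algebra A S] [Algebra A T] (a : Spec (.of T) ⟶ Spec (.of S))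
    (ha : a ≫ specMap (algebraMap A S) = specMap (algebraMap A T)) :
    ∃ g : S →ₐ[A] T, a = specMap (g : S →+* T) := by
  obtain ⟨φ, rfl⟩ := Spec.map_surjective a
  have h : φ.hom.comp (algebraMap A S) = algebraMap A T :=
    specMap_injective ((specMap_comp _ _).trans ha)
  exact ⟨{ φ.hom with commutes' := RingHom.congr_fun h }, rfl⟩

lemma hom_ext_of_forall_spec {X Y : Scheme.{0}} {a b : X ⟶ Y}
    (h : ∀ (R : Type) [CommRing R] (v : Spec (.of R) ⟶ X), v ≫ a = v ≫ b) : a = b :=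
  X.affineOpenCover.openCover.hom_ext _ _ fun j ↦
    h (X.affineOpenCover.X j) (X.affineOpenCover.f j)

lemma hom_ext_of_forall_spec_lift {W X Y : Scheme.{0}} {a b : W ⟶ Y} (p : W ⟶ X) {ι : Type*}
    {V : ι → Scheme.{0}} (u : ∀ i, V i ⟶ X) [∀ i, IsOpenImmersion (u i)]
    (hu : ∀ x, ∃ i, x ∈ (u i).opensRange)
    (h : ∀ (i : ι) (R : Type) [CommRing R] (v : Spec (.of R) ⟶ W) (w : Spec (.of R) ⟶ V i),
      v ≫ p = w ≫ u i → v ≫ a = v ≫ b) : a = b := by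
  refine Scheme.hom_ext_of_forall _ _ fun t ↦ ?_
  obtain ⟨i, hi⟩ := hu (p t)
  refine ⟨p ⁻¹ᵁ (u i).opensRange, hi, hom_ext_of_forall_spec fun R _ v ↦ ?_⟩
  have hr : Set.range ((v ≫ (p ⁻¹ᵁ (u i).opensRange).ι) ≫ p) ⊆ Set.range (u i) := by
    rintro _ ⟨x, rfl⟩
    exact (v x).2
  simpa only [Category.assoc] using h i R (v ≫ (p ⁻¹ᵁ (u i).opensRange).ι)
    (IsOpenImmersion.lift (u i) _ hr) (IsOpenImmersion.lift_fac _ _ _).symm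

open ProjSpace

variable {X : Scheme.{0}} {p : X ⟶ Spec (.of A)} {n : ℕ} {ι : Type*} {R : ι → Type}
  [∀ i, CommRing (R i)] [∀ i, Algebra A (R i)] {u : ∀ i, Spec (.of (R i)) ⟶ X}
  {s : ∀ i, Fin (n + 1) → R i} (hs : ∀ i, Ideal.span (Set.range (s i)) = ⊤)

include hs in
lemma comp_ofCoords_eq_of_smul_eq (hu : ∀ i, u i ≫ p = specMap (algebraMap A (R i)))
    (H : ∀ (i j : ι) (T : Type) [CommRing T] [Algebra A T] (a : R i →ₐ[A] T) (b : R j →ₐ[A] T),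
      specMap (a : R i →+* T) ≫ u i = specMap (b : R j →+* T) ≫ u j →
        ∃ c : T, IsUnit c ∧ b ∘ s j = c • (a ∘ s i))
    {i j : ι} {v : Spec (.of T) ⟶ Spec (.of (R i))} {w : Spec (.of T) ⟶ Spec (.of (R j))}
    (hvw : v ≫ u i = w ≫ u j) : v ≫ ofCoords A (s i) (hs i) = w ≫ ofCoords A (s j) (hs j) := by
  obtain ⟨_, h⟩ := exists_algebra_eq_specMap (v ≫ specMap (algebraMap A (R i)))
  obtain ⟨a, rfl⟩ := exists_algHom_eq_specMap v h
  obtain ⟨b, rfl⟩ := exists_algHom_eq_specMap (S := R j) w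
    (by rw [← h, ← hu i, ← hu j, ← Category.assoc, ← hvw, Category.assoc])
  have ha := span_range_comp_eq_top a (hs i)
  have hb := span_range_comp_eq_top b (hs j)
  obtain ⟨c, hc, hcab⟩ := H i j T a b hvw
  rw [specMap_comp_ofCoords a (hs i) ha, specMap_comp_ofCoords b (hs j) hb]
  exact (ofCoords_eq_of_eq_smul hc hcab).symm

theorem exists_hom_projSpace_of_coords [∀ i, IsOpenImmersion (u i)]
    (hu : ∀ i, u i ≫ p = specMap (algebraMap A (R i)))
    (hc : ∀ x, ∃ i, x ∈ (u i).opensRange)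
    (H : ∀ (i j : ι) (T : Type) [CommRing T] [Algebra A T] (a : R i →ₐ[A] T) (b : R j →ₐ[A] T),
      specMap (a : R i →+* T) ≫ u i = specMap (b : R j →+* T) ≫ u j →
        ∃ c : T, IsUnit c ∧ b ∘ s j = c • (a ∘ s i)) :
    ∃ g : X ⟶ ProjSpace A n, g ≫ structMap A n = p ∧
      ∀ i, u i ≫ g = ofCoords A (s i) (hs i) := by
  have hg (i j : ι) : pullback.fst (u i) (u j) ≫ ofCoords A (s i) (hs i) =
      pullback.snd (u i) (u j) ≫ ofCoords A (s j) (hs j) := by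
    refine hom_ext_of_forall_spec fun T _ v ↦ ?_
    rw [← Category.assoc, ← Category.assoc]
    refine comp_ofCoords_eq_of_smul_eq hs hu H ?_
    rw [Category.assoc, Category.assoc, pullback.condition]
  choose idx hidx using hc
  let 𝒰 : X.OpenCover := Scheme.AffineOpenCover.openCover
    { I₀ := ι, X := fun i ↦ .of (R i), f := u, idx := idx, covers := hidx,
      map_prop := inferInstance }
  have hfac (i : ι) : u i ≫ 𝒰.glueMorphisms (fun i : ι ↦ ofCoords A (s i) (hs i)) hg =
      ofCoords A (s i) (hs i) :=
    𝒰.ι_glueMorphisms (fun i : ι ↦ ofCoords A (s i) (hs i)) hg i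
  refine ⟨_, 𝒰.hom_ext _ _ fun (i : ι) ↦ ?_, hfac⟩
  exact (Category.assoc _ _ _).symm.trans ((congrArg (· ≫ structMap A n) (hfac i)).trans
    ((ofCoords_structMap A _ _).trans (hu i).symm))

end Glue

/-! ### Galois descent of quasi-projectivity -/

section FinitePoints

open ProjSpace

variable {K : Type} [Field K] {n : ℕ}

lemma exists_submodule_ne_top_forall_mem_basicOpen (x : ProjSpace K n) :
    ∃ V : Submodule K (Fin (n + 1) → K), V ≠ ⊤ ∧ ∀ c ∉ V, x ∈ basicOpen c := by
  obtain ⟨i, hi⟩ := TopologicalSpace.Opens.mem_iSup.1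
    ((iSup_basicOpen_single (A := K) (n := n)).symm ▸ TopologicalSpace.Opens.mem_top x)
  rw [← opensRange_chartι] at hi
  obtain ⟨P, rfl⟩ := hi
  let evalMap : (Fin (n + 1) → K) →ₗ[K] ChartRing (Pi.single i (1 : K)) :=
    Fintype.linearCombination K (chartCoord (Pi.single i (1 : K)))
  refine ⟨(P.asIdeal.restrictScalars K).comap evalMap, fun h ↦ P.2.ne_top ?_, fun c hc ↦ ?_⟩
  · rw [Ideal.eq_top_iff_one, ← linEval_chartCoord (Pi.single i (1 : K))]
    exact Submodule.eq_top_iff'.1 h (Pi.single i 1)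
  · change P ∈ chartι _ ⁻¹ᵁ basicOpen c
    rw [chartι_eq_ofCoords, ofCoords_preimage_basicOpen]
    exact hc

lemma exists_forall_mem_basicOpen [Infinite K] {t : Set (ProjSpace K n)} (ht : t.Finite) :
    ∃ c : Fin (n + 1) → K, ∀ x ∈ t, x ∈ basicOpen c := by
  have := ht.to_subtype
  choose V hV hVc using fun x : t ↦ exists_submodule_ne_top_forall_mem_basicOpen (x : ProjSpace K n)
  by_contra! h
  obtain ⟨x, hx⟩ := Subspace.exists_eq_top_of_iUnion_eq_univ (p := V) <| Set.eq_univ_of_forall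
    fun c ↦ by
      obtain ⟨x, hx, hxc⟩ := h c
      exact Set.mem_iUnion.2 ⟨⟨x, hx⟩, not_imp_comm.1 (hVc ⟨x, hx⟩ c) hxc⟩
  exact hV x hx

end FinitePoints

section LocalCoordinates

open TensorProduct ProjSpace

attribute [local instance] Algebra.TensorProduct.rightAlgebra

variable {k L : Type} [Field k] [Field L] [Algebra k L] {Y Y' : Scheme.{0}} {π : Y' ⟶ Y}
  {q' : Y' ⟶ Spec (.of L)} {q : Y ⟶ Spec (.of k)}
  (H : IsPullback π q' q (specMap (algebraMap k L)))
  {R R' : Type} [CommRing R] [Algebra k R] [CommRing R'] [Algebra k R']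

lemma isPullback_specMap_tensor : IsPullback (specMap (algebraMap L (R ⊗[k] L)))
    (specMap (algebraMap R (R ⊗[k] L))) (specMap (algebraMap k L)) (specMap (algebraMap k R)) :=
  (CommRingCat.isPushout_tensorProduct k R L).op.map Scheme.Spec

/-- The base change `Spec (R ⊗[k] L) ⟶ Y'` of an `R`-valued point of `Y`. -/
def liftTensor (u : Spec (.of R) ⟶ Y) (hu : u ≫ q = specMap (algebraMap k R)) :
    Spec (.of (R ⊗[k] L)) ⟶ Y' :=
  H.lift (specMap (algebraMap R (R ⊗[k] L)) ≫ u) (specMap (algebraMap L (R ⊗[k] L)))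
    (by rw [Category.assoc, hu, isPullback_specMap_tensor.w])

section LiftTensor

variable (u : Spec (.of R) ⟶ Y) (hu : u ≫ q = specMap (algebraMap k R))

lemma liftTensor_comp_fst : liftTensor H u hu ≫ π = specMap (algebraMap R (R ⊗[k] L)) ≫ u :=
  H.lift_fst _ _ _

lemma liftTensor_comp_snd : liftTensor H u hu ≫ q' = specMap (algebraMap L (R ⊗[k] L)) :=
  H.lift_snd _ _ _

lemma isPullback_liftTensor :
    IsPullback (liftTensor H u hu) (specMap (algebraMap R (R ⊗[k] L))) π u := by
  refine .of_right ?_ (liftTensor_comp_fst H u hu) H.flip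
  rw [liftTensor_comp_snd, hu]
  exact isPullback_specMap_tensor

lemma specMap_extendScalars_comp_liftTensor (g : R →ₐ[k] R') {u' : Spec (.of R') ⟶ Y}
    (hu' : u' ≫ q = specMap (algebraMap k R')) (h : specMap (g : R →+* R') ≫ u = u') :
    specMap (extendScalars L g : R ⊗[k] L →+* R' ⊗[k] L) ≫ liftTensor H u hu =
      liftTensor H u' hu' := by
  apply H.hom_ext
  · rw [Category.assoc, liftTensor_comp_fst, liftTensor_comp_fst, ← h, ← Category.assoc,
      ← Category.assoc, ← specMap_comp, ← specMap_comp]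
    congr 2
  · rw [Category.assoc, liftTensor_comp_snd, liftTensor_comp_snd, ← specMap_comp]
    congr 1
    exact (extendScalars L g).comp_algebraMap

end LiftTensor

variable {n : ℕ}

include H in
lemma isFinite_of_isPullback_algebraMap [FiniteDimensional k L] : IsFinite π :=
  MorphismProperty.of_isPullback H.flip <| (IsFinite.SpecMap_iff _).2 <|
    RingHom.finite_algebraMap.2 ‹_›

include H in
lemma exists_opens_preimage_le_basicOpen [FiniteDimensional k L] [Infinite L]
    (f : Y' ⟶ ProjSpace L n) (y : Y) :
    ∃ (c : Fin (n + 1) → L) (U : Y.Opens), y ∈ U ∧ π ⁻¹ᵁ U ≤ f ⁻¹ᵁ basicOpen c := by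
  have := isFinite_of_isPullback_algebraMap H
  obtain ⟨c, hc⟩ := exists_forall_mem_basicOpen ((π.finite_preimage_singleton y).image f)
  refine ⟨c, ⟨(π '' (f ⁻¹ᵁ basicOpen c : Set Y')ᶜ)ᶜ,
    (π.isClosedMap _ (f ⁻¹ᵁ basicOpen c).isOpen.isClosed_compl).isOpen_compl⟩, ?_, ?_⟩
  · rintro ⟨z, hz, rfl⟩
    exact hz (hc _ ⟨z, rfl, rfl⟩)
  · exact fun z hz ↦ by_contra fun h ↦ hz ⟨z, h, rfl⟩

/-- An affine chart `u : Spec R ⟶ Y` with homogeneous coordinates over `R ⊗[k] L` for the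
restriction of `f` to the preimage of the chart. -/
structure LocalCoords (f : Y' ⟶ ProjSpace L n) where
  R : Type
  [commRing : CommRing R]
  [algebra : Algebra k R]
  u : Spec (.of R) ⟶ Y
  [isOpenImmersion : IsOpenImmersion u]
  u_comp : u ≫ q = specMap (algebraMap k R)
  s : Fin (n + 1) → R ⊗[k] L
  span_range_s : Ideal.span (Set.range s) = ⊤
  liftTensor_comp : liftTensor H u u_comp ≫ f = ofCoords L s span_range_s

attribute [instance] LocalCoords.commRing LocalCoords.algebra LocalCoords.isOpenImmersion

variable {H} {f : Y' ⟶ ProjSpace L n}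

lemma LocalCoords.exists_extendScalars_eq_smul (c c' : LocalCoords H f) {T : Type} [CommRing T]
    [Algebra k T] (a : c.R →ₐ[k] T) (b : c'.R →ₐ[k] T)
    (h : specMap (a : c.R →+* T) ≫ c.u = specMap (b : c'.R →+* T) ≫ c'.u) :
    ∃ v : T ⊗[k] L, IsUnit v ∧ extendScalars L b ∘ c'.s = v • (extendScalars L a ∘ c.s) := by
  have hb : (specMap (b : c'.R →+* T) ≫ c'.u) ≫ q = specMap (algebraMap k T) := by
    rw [Category.assoc, c'.u_comp, ← specMap_comp, AlgHom.comp_algebraMap]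
  refine exists_eq_smul_of_ofCoords_eq (A := L)
    (hs := span_range_comp_eq_top (extendScalars L a) c.span_range_s)
    (hs' := span_range_comp_eq_top (extendScalars L b) c'.span_range_s) ?_
  rw [← specMap_comp_ofCoords (extendScalars L a) c.span_range_s, ← c.liftTensor_comp,
    ← specMap_comp_ofCoords (extendScalars L b) c'.span_range_s, ← c'.liftTensor_comp,
    ← Category.assoc, ← Category.assoc, specMap_extendScalars_comp_liftTensor H c.u _ a hb h,
    specMap_extendScalars_comp_liftTensor H c'.u _ b hb rfl]

omit [Algebra k R] in
lemma exists_localCoords_of_preimage_le (u : Spec (.of R) ⟶ Y) [IsOpenImmersion u]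
    (hf : f ≫ structMap L n = q') {c : Fin (n + 1) → L}
    (hu : π ⁻¹ᵁ u.opensRange ≤ f ⁻¹ᵁ basicOpen c) :
    ∃ d : LocalCoords H f, d.u.opensRange = u.opensRange := by
  obtain ⟨_, hk⟩ := exists_algebra_eq_specMap (u ≫ q)
  have hc : (liftTensor H u hk ≫ f) ⁻¹ᵁ basicOpen c = ⊤ := by
    refine eq_top_iff.2 fun z _ ↦ hu ⟨specMap (algebraMap R (R ⊗[k] L)) z, ?_⟩
    exact (congr($(liftTensor_comp_fst H u hk) z)).symm
  obtain ⟨s, hs, -, h⟩ := exists_eq_ofCoords c (liftTensor H u hk ≫ f)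
    (by rw [Category.assoc, hf, liftTensor_comp_snd]) hc
  exact ⟨⟨R, u, hk, s, hs, h⟩, rfl⟩

variable [FiniteDimensional k L]

lemma exists_localCoords [Infinite L] (hf : f ≫ structMap L n = q') (y : Y) :
    ∃ d : LocalCoords H f, y ∈ d.u.opensRange := by
  obtain ⟨c, U, hy, hU⟩ := exists_opens_preimage_le_basicOpen H f y
  obtain ⟨_, ⟨V, (hV : IsAffineOpen V), rfl⟩, hyV, hVU⟩ :=
    Y.isBasis_affineOpens.exists_subset_of_mem_open hy U.2
  have hr : hV.fromSpec.opensRange = V := hV.opensRange_fromSpec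
  have hle : π ⁻¹ᵁ hV.fromSpec.opensRange ≤ f ⁻¹ᵁ basicOpen c := by
    rw [hr]
    exact fun z hz ↦ hU (hVU hz)
  obtain ⟨d, hd⟩ := exists_localCoords_of_preimage_le (H := H) (R := Γ(Y, V)) hV.fromSpec hf hle
  exact ⟨d, by rw [hd, hr]; exact hyV⟩

lemma exists_hom_projSpace_traceDim [IsGalois k L] {ι : Type*} (d : ι → LocalCoords H f)
    (hd : ∀ y, ∃ i, y ∈ (d i).u.opensRange) :
    ∃ g : Y ⟶ ProjSpace k (traceDim k L n), g ≫ structMap k _ = q ∧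
      ∀ i, (d i).u ≫ g =
        ofCoords k (traceCoords (d i).s) (span_range_traceCoords (d i).span_range_s) := by
  refine exists_hom_projSpace_of_coords _ (fun i ↦ (d i).u_comp) hd fun i j T _ _ a b h ↦ ?_
  obtain ⟨v, hv, hvs⟩ := (d i).exists_extendScalars_eq_smul (d j) a b h
  obtain ⟨w, hw, hws⟩ := exists_traceCoords_smul_eq hv (extendScalars L a ∘ (d i).s)
  exact ⟨w, hw, by rw [← traceCoords_extendScalars, ← traceCoords_extendScalars, hvs, hws]⟩

end LocalCoordinates

section UntraceCoords

open TensorProduct ProjSpace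

attribute [local instance] Algebra.TensorProduct.rightAlgebra

variable {k L : Type} [Field k] [Field L] [Algebra k L] [FiniteDimensional k L] [IsGalois k L]
  {R : Type} [CommRing R] [Algebra k R] {n : ℕ}

/-- Homogeneous coordinates, on the chart of `ProjSpace L (traceDim k L n)` given by the linear form
`untraceForm I`, that recover `s` up to a common factor from `traceCoords s`. -/
def untraceCoords [DecidableEq (L ≃ₐ[k] L)] (I : (L ≃ₐ[k] L) → Fin (n + 1)) (i : Fin (n + 1)) :
    ChartRing (untraceForm I) :=
  linEval (untraceForm (Function.update I 1 i)) (chartCoord (untraceForm I))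

variable [DecidableEq (L ≃ₐ[k] L)]

lemma untraceCoords_apply_one (I : (L ≃ₐ[k] L) → Fin (n + 1)) : untraceCoords I (I 1) = 1 := by
  rw [untraceCoords, Function.update_eq_self, linEval_chartCoord]

lemma span_range_untraceCoords (I : (L ≃ₐ[k] L) → Fin (n + 1)) :
    Ideal.span (Set.range (untraceCoords I)) = ⊤ :=
  (Ideal.eq_top_iff_one _).2 (Ideal.subset_span ⟨I 1, untraceCoords_apply_one I⟩)

lemma exists_untraceCoords_eq_smul {T : Type} [CommRing T] [Algebra L T]
    (I : (L ≃ₐ[k] L) → Fin (n + 1)) (θ : ChartRing (untraceForm I) →ₐ[L] T)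
    (η : R ⊗[k] L →ₐ[L] T) (s : Fin (n + 1) → R ⊗[k] L) {u : T} (hu : IsUnit u)
    (hus : η ∘ algebraMap R (R ⊗[k] L) ∘ traceCoords s = u • (θ ∘ chartCoord (untraceForm I))) :
    ∃ w : T, IsUnit w ∧ θ ∘ untraceCoords I = w • (η ∘ s) := by
  obtain ⟨u, rfl⟩ := hu
  obtain ⟨P, hP⟩ := exists_twistedProd_update_eq s I
  have h (I' : (L ≃ₐ[k] L) → Fin (n + 1)) :
      u * θ (linEval (untraceForm I') (chartCoord (untraceForm I))) = η (twistedProd s I') := by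
    rw [← linEval_untraceForm, ← linEval_comp, ← linEval_comp, hus, linEval_smul]
  have hw (i : Fin (n + 1)) : θ (untraceCoords I i) = ↑u⁻¹ * η P * η (s i) := by
    rw [mul_assoc, Units.eq_inv_mul_iff_mul_eq, ← map_mul, ← hP, ← h]
    rfl
  refine ⟨↑u⁻¹ * η P, .of_mul_eq_one (η (s (I 1))) ?_, funext hw⟩
  rw [← hw, untraceCoords_apply_one, map_one]

lemma comp_ofCoords_untraceCoords_eq {T : Type} [CommRing T] (I : (L ≃ₐ[k] L) → Fin (n + 1))
    {s : Fin (n + 1) → R ⊗[k] L} (hs : Ideal.span (Set.range s) = ⊤)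
    (hs' : Ideal.span (Set.range (algebraMap R (R ⊗[k] L) ∘ traceCoords s)) = ⊤)
    {v : Spec (.of T) ⟶ Spec (.of (ChartRing (untraceForm I)))}
    {l : Spec (.of T) ⟶ Spec (.of (R ⊗[k] L))}
    (h : v ≫ chartι (untraceForm I) = l ≫ ofCoords L _ hs') :
    v ≫ ofCoords L (untraceCoords I) (span_range_untraceCoords I) = l ≫ ofCoords L s hs := by
  obtain ⟨_, hl⟩ := exists_algebra_eq_specMap (l ≫ specMap (algebraMap L (R ⊗[k] L)))
  have hv : v ≫ specMap (algebraMap L (ChartRing (untraceForm I))) = specMap (algebraMap L T) := by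
    rw [← chartι_structMap, ← Category.assoc, h, Category.assoc, ofCoords_structMap, hl]
  obtain ⟨θ, rfl⟩ := exists_algHom_eq_specMap v hv
  obtain ⟨η, rfl⟩ := exists_algHom_eq_specMap l hl
  rw [chartι_eq_ofCoords,
    specMap_comp_ofCoords θ _ (span_range_comp_eq_top θ (span_range_chartCoord _)),
    specMap_comp_ofCoords η hs' (span_range_comp_eq_top η hs')] at h
  obtain ⟨u, hu, hus⟩ := exists_eq_smul_of_ofCoords_eq h
  obtain ⟨w, hw, hws⟩ := exists_untraceCoords_eq_smul I θ η s hu hus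
  rw [specMap_comp_ofCoords θ _ (span_range_comp_eq_top θ (span_range_untraceCoords I)),
    specMap_comp_ofCoords η hs (span_range_comp_eq_top η hs)]
  exact ofCoords_eq_of_eq_smul hw hws

end UntraceCoords

section GaloisDescent

open TensorProduct ProjSpace

attribute [local instance] Algebra.TensorProduct.rightAlgebra

variable {k L : Type} [Field k] [Field L] [Algebra k L] [FiniteDimensional k L] [IsGalois k L]
  {Y Y' : Scheme.{0}} {π : Y' ⟶ Y} {q' : Y' ⟶ Spec (.of L)} {q : Y ⟶ Spec (.of k)}
  {H : IsPullback π q' q (specMap (algebraMap k L))} {n : ℕ} {f : Y' ⟶ ProjSpace L n}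

lemma span_range_algebraMap_traceCoords (d : LocalCoords H f) :
    Ideal.span (Set.range (algebraMap d.R (d.R ⊗[k] L) ∘ traceCoords d.s)) = ⊤ :=
  span_range_comp_eq_top (algebraMap d.R (d.R ⊗[k] L)) (span_range_traceCoords d.span_range_s)

lemma liftTensor_comp_eq_ofCoords {g : Y ⟶ ProjSpace k (traceDim k L n)}
    {G : Y' ⟶ ProjSpace L (traceDim k L n)} (hG : G ≫ map k L _ = π ≫ g)
    (hGs : G ≫ structMap L _ = q') (d : LocalCoords H f)
    (hd : d.u ≫ g = ofCoords k (traceCoords d.s) (span_range_traceCoords d.span_range_s)) :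
    liftTensor H d.u d.u_comp ≫ G = ofCoords L _ (span_range_algebraMap_traceCoords d) := by
  refine (isPullback_map (A := k) (B := L)).hom_ext ?_ ?_
  · rw [Category.assoc, hG, ← Category.assoc, liftTensor_comp_fst, Category.assoc, hd,
      ofCoords_map]
    exact specMap_comp_ofCoords (Algebra.algHom k d.R (d.R ⊗[k] L)) _ _
  · rw [Category.assoc, hGs, liftTensor_comp_snd, ofCoords_structMap]

lemma pullback_snd_comp_ofCoords_untraceCoords [DecidableEq (L ≃ₐ[k] L)] {ι : Type*}
    {d : ι → LocalCoords H f} (hd : ∀ y, ∃ i, y ∈ (d i).u.opensRange)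
    {G : Y' ⟶ ProjSpace L (traceDim k L n)}
    (hG : ∀ i, liftTensor H (d i).u (d i).u_comp ≫ G =
      ofCoords L _ (span_range_algebraMap_traceCoords (d i)))
    (I : (L ≃ₐ[k] L) → Fin (n + 1)) :
    pullback.snd G (chartι (untraceForm I)) ≫
        ofCoords L (untraceCoords I) (span_range_untraceCoords I) =
      pullback.fst G (chartι (untraceForm I)) ≫ f := by
  refine hom_ext_of_forall_spec_lift (pullback.fst _ _ ≫ π) (fun i ↦ (d i).u) hd
    fun i T _ v w h ↦ ?_
  have hP := isPullback_liftTensor H (d i).u (d i).u_comp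
  obtain ⟨l, hl, -⟩ := hP.exists_lift (v ≫ pullback.fst _ _) w (by rw [Category.assoc, h])
  rw [← Category.assoc, ← Category.assoc, ← hl, Category.assoc l, (d i).liftTensor_comp]
  refine comp_ofCoords_untraceCoords_eq I _ (span_range_algebraMap_traceCoords (d i)) ?_
  rw [Category.assoc, ← pullback.condition, ← Category.assoc, ← hl, Category.assoc, hG]

lemma exists_mem_basicOpen_untraceForm (d : LocalCoords H f) {x : Y'} (hx : π x ∈ d.u.opensRange)
    {G : Y' ⟶ ProjSpace L (traceDim k L n)}
    (hG : liftTensor H d.u d.u_comp ≫ G = ofCoords L _ (span_range_algebraMap_traceCoords d)) :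
    ∃ I : (L ≃ₐ[k] L) → Fin (n + 1), G x ∈ basicOpen (untraceForm I) := by
  obtain ⟨z, hz⟩ := hx
  obtain ⟨P, rfl, -⟩ :=
    Scheme.exists_preimage_of_isPullback (isPullback_liftTensor H d.u d.u_comp) x z hz.symm
  obtain ⟨I, hI⟩ : ∃ I, twistedProd d.s I ∉ P.asIdeal := by
    by_contra! h
    refine P.2.ne_top (top_le_iff.1 ?_)
    rw [← span_range_twistedProd d.span_range_s, Ideal.span_le]
    exact Set.range_subset_iff.2 h
  refine ⟨I, ?_⟩
  change P ∈ (liftTensor H d.u d.u_comp ≫ G) ⁻¹ᵁ basicOpen (untraceForm I)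
  rw [hG, ofCoords_preimage_basicOpen, linEval_untraceForm]
  exact hI

lemma isImmersion_of_liftTensor_comp_eq_ofCoords [IsImmersion f] {ι : Type*}
    {d : ι → LocalCoords H f} (hd : ∀ y, ∃ i, y ∈ (d i).u.opensRange)
    {G : Y' ⟶ ProjSpace L (traceDim k L n)}
    (hG : ∀ i, liftTensor H (d i).u (d i).u_comp ≫ G =
      ofCoords L _ (span_range_algebraMap_traceCoords (d i))) : IsImmersion G := by
  classical
  refine isImmersion_of_forall_exists_pullback_snd G fun x ↦ ?_
  obtain ⟨i, hi⟩ := hd (π x)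
  obtain ⟨I, hI⟩ := exists_mem_basicOpen_untraceForm (d i) hi (hG i)
  refine ⟨_, chartι (untraceForm I), inferInstance, by rwa [opensRange_chartι], ?_⟩
  have : IsImmersion (pullback.snd G (chartι (untraceForm I)) ≫
      ofCoords L (untraceCoords I) (span_range_untraceCoords I)) := by
    rw [pullback_snd_comp_ofCoords_untraceCoords hd hG I]
    infer_instance
  exact IsImmersion.of_comp _ (ofCoords L (untraceCoords I) (span_range_untraceCoords I))

lemma flat_and_surjective_specMap (A B : Type) [CommRing A] [CommRing B] [Algebra A B]
    [Module.FaithfullyFlat A B] :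
    Flat (specMap (algebraMap A B)) ∧ Surjective (specMap (algebraMap A B)) :=
  (flat_and_surjective_SpecMap_iff (CommRingCat.ofHom (algebraMap A B))).2
    (RingHom.faithfullyFlat_algebraMap_iff.2 inferInstance)

lemma isImmersion_of_isPullback_map {A B : Type} [CommRing A] [CommRing B] [Algebra A B]
    [Module.FaithfullyFlat A B] [Algebra.FinitePresentation A B] {N : ℕ} {X X' : Scheme.{0}}
    {p : X' ⟶ X} {g' : X' ⟶ ProjSpace B N} {g : X ⟶ ProjSpace A N}
    (h : IsPullback p g' g (map A B N)) [IsImmersion g'] : IsImmersion g := by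
  obtain ⟨_, _⟩ := flat_and_surjective_specMap A B
  have hf : LocallyOfFinitePresentation (specMap (algebraMap A B)) :=
    (LocallyOfFinitePresentation.SpecMap_iff _).2 (RingHom.finitePresentation_algebraMap.2 ‹_›)
  have hs := (isPullback_map (A := A) (B := B) (n := N)).flip
  have : Surjective (map A B N) := MorphismProperty.of_isPullback hs ‹_›
  have : Flat (map A B N) := MorphismProperty.of_isPullback hs ‹_›
  have : QuasiCompact (map A B N) := MorphismProperty.of_isPullback hs inferInstance
  have : LocallyOfFinitePresentation (map A B N) := MorphismProperty.of_isPullback hs hf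
  exact isImmersion_of_isPullback h

theorem QuasiProjectiveOver.of_isGalois [Infinite L]
    (H : IsPullback π q' q (specMap (algebraMap k L))) (hq : QuasiProjectiveOver L q') :
    QuasiProjectiveOver k q := by
  obtain ⟨n, f, hf, hfq⟩ := hq
  choose d hd using exists_localCoords (H := H) hfq
  obtain ⟨g, hgq, hg⟩ := exists_hom_projSpace_traceDim d fun y ↦ ⟨y, hd y⟩
  obtain ⟨G, hG, hGq⟩ := (isPullback_map (A := k) (B := L)).exists_lift (π ≫ g) q'
    (by rw [Category.assoc, hgq, H.w])
  have hGi : IsImmersion G := isImmersion_of_liftTensor_comp_eq_ofCoords (fun y ↦ ⟨y, hd y⟩)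
    fun i ↦ liftTensor_comp_eq_ofCoords hG hGq (d i) (hg i)
  have hP : IsPullback π G g (map k L _) :=
    .of_bot (by rwa [hGq, hgq]) hG.symm isPullback_map
  have : Algebra.FinitePresentation k L := Algebra.FinitePresentation.of_finiteType.1 inferInstance
  exact ⟨_, g, isImmersion_of_isPullback_map hP, hgq⟩

end GaloisDescent

/-! ### Spreading out immersions along cofiltered limits -/

section BaseChangeAlong

variable {X Z A B : Scheme.{0}}

lemma pullback_fst_comp_iff (P : MorphismProperty Scheme.{0}) [P.IsStableUnderBaseChange]
    (z : B ⟶ A) (b : A ⟶ Z) (f : X ⟶ Z) :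
    P (pullback.fst (z ≫ b) f) ↔ P (pullback.fst z (pullback.fst b f)) := by
  have : P.RespectsIso := MorphismProperty.IsStableUnderBaseChange.respectsIso
  rw [← P.cancel_left_of_respectsIso (pullbackRightPullbackFstIso b f z).hom,
    pullbackRightPullbackFstIso_hom_fst]

lemma pullback_fst_comp (P : MorphismProperty Scheme.{0}) [P.IsStableUnderBaseChange]
    (z : B ⟶ A) (b : A ⟶ Z) (f : X ⟶ Z) (h : P (pullback.fst b f)) :
    P (pullback.fst (z ≫ b) f) :=
  (pullback_fst_comp_iff P z b f).2 (P.pullback_fst _ _ h)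

lemma pullback_fst_pullback_snd_iff (P : MorphismProperty Scheme.{0}) [P.IsStableUnderBaseChange]
    {S T Z' X' : Scheme.{0}} {s : T ⟶ S} {z : Z ⟶ S} {b : Z' ⟶ Z} {z' : Z' ⟶ T} {a : X' ⟶ X}
    {f' : X' ⟶ Z'} {f : X ⟶ Z} (hZ : IsPullback b z' z s) (hX : IsPullback a f' f b) :
    P (pullback.fst (pullback.snd s z) f) ↔ P f' := by
  have : P.RespectsIso := MorphismProperty.IsStableUnderBaseChange.respectsIso
  rw [← P.cancel_left_of_respectsIso hX.flip.isoPullback.inv f', hX.flip.isoPullback_inv_fst]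
  refine ⟨fun h ↦ ?_, fun h ↦ ?_⟩
  · rw [← hZ.flip.isoPullback_hom_snd]
    exact pullback_fst_comp P _ _ _ h
  · rw [← hZ.flip.isoPullback_inv_snd]
    exact pullback_fst_comp P _ _ _ h

lemma isClosedImmersion_pullback_fst_of_forall_mem_coborderRange (n : A ⟶ Z) (f : X ⟶ Z)
    [IsImmersion f] (h : ∀ x, n x ∈ f.coborderRange) : IsClosedImmersion (pullback.fst n f) := by
  have sq : IsPullback f.liftCoborder (𝟙 X) f.coborderRange.ι f :=
    IsPullback.of_vert_isIso_mono ⟨by simp⟩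
  have hι : IsClosedImmersion (pullback.fst f.coborderRange.ι f) := by
    rw [← sq.isoPullback_inv_fst]
    infer_instance
  rw [← IsOpenImmersion.lift_fac f.coborderRange.ι n
    (by rintro _ ⟨x, rfl⟩; simpa using h x)]
  exact pullback_fst_comp @IsClosedImmersion _ _ f hι

lemma isAffine_pullback (u : A ⟶ Z) (w : B ⟶ Z) [IsAffineHom u] [IsAffine B] :
    IsAffine (pullback u w) :=
  isAffine_of_isAffineHom (pullback.snd u w)

lemma compactSpace_pullback (b : A ⟶ Z) (f : X ⟶ Z) [CompactSpace A] [QuasiCompact f] :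
    CompactSpace ↥(pullback b f) :=
  QuasiCompact.compactSpace_of_compactSpace (pullback.fst b f)

lemma quasiSeparatedSpace_pullback (b : A ⟶ Z) (f : X ⟶ Z) [QuasiSeparatedSpace A]
    [QuasiSeparated f] : QuasiSeparatedSpace ↥(pullback b f) :=
  quasiSeparatedSpace_of_quasiSeparated (pullback.fst b f)

lemma over_pullback_map_left_fst {A B : Over Z} (u : A ⟶ B) (f : X ⟶ Z) :
    ((Over.pullback f).map u).left ≫ pullback.fst B.hom f = pullback.fst A.hom f ≫ u.left :=
  pullback.lift_fst _ _ _

lemma over_pullback_map_left_snd {A B : Over Z} (u : A ⟶ B) (f : X ⟶ Z) :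
    ((Over.pullback f).map u).left ≫ pullback.snd B.hom f = pullback.snd A.hom f :=
  pullback.lift_snd _ _ _

lemma isPullback_over_pullback_map_left {A B : Over Z} (u : A ⟶ B) (f : X ⟶ Z) :
    IsPullback ((Over.pullback f).map u).left (pullback.fst A.hom f) (pullback.fst B.hom f)
      u.left := by
  refine IsPullback.of_right ?_ (over_pullback_map_left_fst u f)
    (IsPullback.of_hasPullback B.hom f).flip
  rw [over_pullback_map_left_snd, Over.w]
  exact (IsPullback.of_hasPullback A.hom f).flip

lemma isAffineHom_over_pullback_map_left {A B : Over Z} (u : A ⟶ B) (f : X ⟶ Z)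
    [IsAffineHom u.left] : IsAffineHom ((Over.pullback f).map u).left :=
  MorphismProperty.of_isPullback (P := @IsAffineHom) (isPullback_over_pullback_map_left u f).flip
    inferInstance

lemma appTop_over_pullback_map_left_fst {A B : Over Z} (u : A ⟶ B) (f : X ⟶ Z)
    (v : Γ(B.left, ⊤)) :
    ((Over.pullback f).map u).left.appTop ((pullback.fst B.hom f).appTop v) =
      (pullback.fst A.hom f).appTop (u.left.appTop v) := by
  simp only [← CommRingCat.comp_apply, ← Scheme.Hom.comp_appTop, over_pullback_map_left_fst]

lemma appTop_over_pullback_map_left_snd {A B : Over Z} (u : A ⟶ B) (f : X ⟶ Z) (s : Γ(X, ⊤)) :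
    ((Over.pullback f).map u).left.appTop ((pullback.snd B.hom f).appTop s) =
      (pullback.snd A.hom f).appTop s := by
  simp only [← CommRingCat.comp_apply, ← Scheme.Hom.comp_appTop, over_pullback_map_left_snd]

end BaseChangeAlong

lemma surjective_of_isPushout {A B C D : CommRingCat.{0}} {f : A ⟶ B} {g : A ⟶ C} {i : B ⟶ D}
    {j : C ⟶ D} (H : IsPushout f g i j) (h : ∀ b, i b ∈ j.hom.range) :
    Function.Surjective j := by
  let i' : B ⟶ .of j.hom.range := CommRingCat.ofHom (i.hom.codRestrict j.hom.range h)
  let j' : C ⟶ .of j.hom.range := CommRingCat.ofHom j.hom.rangeRestrict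
  let e : CommRingCat.of j.hom.range ⟶ D := CommRingCat.ofHom j.hom.range.subtype
  have hw : f ≫ i' = g ≫ j' := by
    ext a
    exact congr($(H.w) a)
  have hd : H.desc i' j' hw ≫ e = 𝟙 D :=
    H.hom_ext (by rw [IsPushout.inl_desc_assoc]; rfl) (by rw [IsPushout.inr_desc_assoc]; rfl)
  intro d
  obtain ⟨c, hc⟩ := (H.desc i' j' hw d).2
  exact ⟨c, hc.trans congr($hd d)⟩

section Limits

attribute [local instance] IsCofiltered.isConnected

variable {I : Type} [SmallCategory I] [IsCofiltered I] {X Z : Scheme.{0}} {E : I ⥤ Over Z}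
  {c : Cone E} (hc : IsLimit c) (f : X ⟶ Z)

include hc in
lemma exists_appTop_fst_eq_appTop_snd [IsAffine X] [IsAffine Z] [∀ i, IsAffine (E.obj i).left]
    {s : Γ(X, ⊤)} (hs : (pullback.snd c.pt.hom f).appTop s ∈
      (pullback.fst c.pt.hom f).appTop.hom.range) :
    ∃ i, (pullback.snd (E.obj i).hom f).appTop s ∈
      (pullback.fst (E.obj i).hom f).appTop.hom.range := by
  obtain ⟨w, hw⟩ := hs
  have (i : I) : IsAffine ((E ⋙ Over.forget Z).obj i) := inferInstanceAs (IsAffine (E.obj i).left)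
  have (i : I) : IsAffine ((E ⋙ Over.pullback f ⋙ Over.forget X).obj i) :=
    inferInstanceAs (IsAffine (pullback (E.obj i).hom f))
  obtain ⟨i, v, rfl⟩ := exists_appTop_π_eq_of_isAffine_of_isLimit (E ⋙ Over.forget Z) _
    (isLimitOfPreserves (Over.forget Z) hc) w
  obtain ⟨j, φ, hφ⟩ := exists_appTop_map_eq_zero_of_isAffine_of_isLimit
    (E ⋙ Over.pullback f ⋙ Over.forget X) _
    (isLimitOfPreserves (Over.pullback f ⋙ Over.forget X) hc) i
    ((pullback.fst (E.obj i).hom f).appTop v - (pullback.snd (E.obj i).hom f).appTop s)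
    ((map_sub _ _ _).trans (sub_eq_zero.2
      ((appTop_over_pullback_map_left_fst (c.π.app i) f v).trans
        (hw.trans (appTop_over_pullback_map_left_snd (c.π.app i) f s).symm))))
  refine ⟨j, (E.map φ).left.appTop v, ?_⟩
  exact (appTop_over_pullback_map_left_fst (E.map φ) f v).symm.trans
    ((sub_eq_zero.1 ((map_sub _ _ _).symm.trans hφ)).trans
      (appTop_over_pullback_map_left_snd (E.map φ) f s))

lemma exists_finset_forall_subring_eq_top [IsAffine X] [IsAffine Z] [LocallyOfFiniteType f] :
    ∃ F : Finset Γ(X, ⊤), ∀ Q : Subring Γ(X, ⊤), f.appTop.hom.range ≤ Q → ↑F ⊆ (Q : Set Γ(X, ⊤)) →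
      Q = ⊤ := by
  algebraize [f.appTop.hom]
  obtain ⟨F, hF⟩ : Algebra.FiniteType Γ(Z, ⊤) Γ(X, ⊤) :=
    HasRingHomProperty.appTop @LocallyOfFiniteType f inferInstance
  refine ⟨F, fun Q hfQ hFQ ↦ top_unique fun s _ ↦ ?_⟩
  have hs : s ∈ Algebra.adjoin Γ(Z, ⊤) (F : Set Γ(X, ⊤)) := hF ▸ Algebra.mem_top
  exact Subring.closure_le.2 (Set.union_subset hfQ hFQ) (Algebra.mem_adjoin_iff.1 hs)

include hc in
lemma exists_isClosedImmersion_of_isAffine [IsAffine X] [IsAffine Z]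
    [∀ i, IsAffine (E.obj i).left] [LocallyOfFiniteType f]
    (h : IsClosedImmersion (pullback.fst c.pt.hom f)) :
    ∃ i, IsClosedImmersion (pullback.fst (E.obj i).hom f) := by
  classical
  let Q (i : I) : Subring Γ(X, ⊤) := (pullback.fst (E.obj i).hom f).appTop.hom.range.comap
    (pullback.snd (E.obj i).hom f).appTop.hom
  have Q_mono {i j : I} (φ : i ⟶ j) : Q j ≤ Q i := by
    rintro s ⟨v, hv⟩
    exact ⟨(E.map φ).left.appTop v, (appTop_over_pullback_map_left_fst (E.map φ) f v).symm.trans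
      ((congrArg _ hv).trans (appTop_over_pullback_map_left_snd (E.map φ) f s))⟩
  have : IsAffine c.pt.left := by
    have (i : I) : IsAffine ((E ⋙ Over.forget Z).obj i) := inferInstanceAs (IsAffine (E.obj i).left)
    exact Scheme.isAffine_of_isLimit _ (isLimitOfPreserves (Over.forget Z) hc)
  have mem_Q (s : Γ(X, ⊤)) : ∃ i, s ∈ Q i := exists_appTop_fst_eq_appTop_snd hc f
    ((IsClosedImmersion.isAffine_surjective_of_isAffine (pullback.fst c.pt.hom f)).2 _)
  choose i hi using mem_Q
  obtain ⟨F, hF⟩ := exists_finset_forall_subring_eq_top f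
  obtain ⟨j, hj⟩ := IsCofiltered.inf_objs_exists (F.image i)
  refine ⟨j, IsClosedImmersion.of_surjective_of_isAffine _ ?_⟩
  refine surjective_of_isPushout
    (isPushout_appTop_of_isPullback (IsPullback.of_hasPullback (E.obj j).hom f)).flip fun s ↦ ?_
  have : Q j = ⊤ := by
    refine hF _ ?_ fun s hs ↦ Q_mono (hj (Finset.mem_image_of_mem i hs)).some (hi s)
    rintro _ ⟨z, rfl⟩
    exact ⟨(E.obj j).hom.appTop z, by
      simp only [← CommRingCat.comp_apply, ← Scheme.Hom.comp_appTop, pullback.condition]⟩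
  exact (this ▸ Subring.mem_top s : s ∈ Q j)

include hc in
lemma exists_isClosedImmersion_of_forall_isAffine [∀ i, IsAffine (E.obj i).left]
    [LocallyOfFiniteType f] [QuasiCompact f] [QuasiSeparated f]
    (h : IsClosedImmersion (pullback.fst c.pt.hom f)) :
    ∃ i, IsClosedImmersion (pullback.fst (E.obj i).hom f) := by
  let D := E ⋙ Over.pullback f ⋙ Over.forget X
  have hD : IsLimit ((Over.pullback f ⋙ Over.forget X).mapCone c) := isLimitOfPreserves _ hc
  have (i : I) : IsAffine ((E ⋙ Over.forget Z).obj i) := inferInstanceAs (IsAffine (E.obj i).left)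
  have : IsAffine c.pt.left := Scheme.isAffine_of_isLimit _ (isLimitOfPreserves (Over.forget Z) hc)
  have : IsAffine (pullback c.pt.hom f) := isAffine_of_isAffineHom (pullback.fst c.pt.hom f)
  have : IsAffine ((Over.pullback f ⋙ Over.forget X).mapCone c).pt :=
    inferInstanceAs (IsAffine (pullback c.pt.hom f))
  have {i j : I} (φ : i ⟶ j) : IsAffineHom (D.map φ) :=
    isAffineHom_over_pullback_map_left (E.map φ) f
  have (i : I) : CompactSpace (D.obj i) := compactSpace_pullback (E.obj i).hom f
  have (i : I) : QuasiSeparatedSpace (D.obj i) := quasiSeparatedSpace_pullback (E.obj i).hom f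
  obtain ⟨i, hi⟩ : ∃ i, IsAffine (pullback (E.obj i).hom f) :=
    Scheme.exists_isAffine_of_isLimit D _ hD
  let F : Over i ⥤ Over (E.obj i).left := Over.post (E ⋙ Over.forget Z)
  have (j : Over i) : IsAffine (F.obj j).left := inferInstanceAs (IsAffine (E.obj j.left).left)
  obtain ⟨j, hj⟩ := exists_isClosedImmersion_of_isAffine (E := F)
    (Over.isLimitConePost i (isLimitOfPreserves (Over.forget Z) hc)) (pullback.fst (E.obj i).hom f)
    ((pullback_fst_comp_iff @IsClosedImmersion (c.π.app i).left (E.obj i).hom f).1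
      (by rwa [Over.w]))
  refine ⟨j.left, ?_⟩
  rw [← Over.w (E.map j.hom)]
  exact (pullback_fst_comp_iff @IsClosedImmersion (E.map j.hom).left (E.obj i).hom f).2 hj

include hc in
lemma exists_isClosedImmersion_pullback_fst_comp [∀ {i j} (φ : i ⟶ j), IsAffineHom (E.map φ).left]
    [LocallyOfFiniteType f] [QuasiCompact f] [QuasiSeparated f] {i : I} {W : Scheme.{0}}
    [IsAffine W] (w : W ⟶ (E.obj i).left)
    (h : IsClosedImmersion (pullback.fst (pullback.fst (c.π.app i).left w ≫ c.pt.hom) f)) :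
    ∃ (j : I) (φ : j ⟶ i),
      IsClosedImmersion (pullback.fst (pullback.fst (E.map φ).left w ≫ (E.obj j).hom) f) := by
  let p : Over ((E ⋙ Over.forget Z).obj i) ⥤ Over W := Over.pullback w
  have : PreservesLimitsOfShape (Over i) p :=
    inferInstanceAs (PreservesLimitsOfShape (Over i) (Over.pullback w))
  let F : Over i ⥤ Over W := Over.post (E ⋙ Over.forget Z) ⋙ p
  have (j : Over i) : IsAffine (F.obj j).left :=
    isAffine_pullback (E.map j.hom).left w
  have comp_eq {A : Over Z} (u : A ⟶ E.obj i) :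
      pullback.fst u.left w ≫ A.hom = pullback.snd u.left w ≫ w ≫ (E.obj i).hom := by
    rw [← pullback.condition_assoc, Over.w]
  obtain ⟨j, hj⟩ := exists_isClosedImmersion_of_forall_isAffine (E := F)
    (isLimitOfPreserves p
      (Over.isLimitConePost i (isLimitOfPreserves (Over.forget Z) hc)))
    (pullback.fst (w ≫ (E.obj i).hom) f)
    ((pullback_fst_comp_iff @IsClosedImmersion (pullback.snd (c.π.app i).left w) _ f).1
      (comp_eq (c.π.app i) ▸ h))
  refine ⟨j.left, j.hom, ?_⟩
  rw [comp_eq (E.map j.hom)]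
  exact (pullback_fst_comp_iff @IsClosedImmersion (pullback.snd (E.map j.hom).left w) _ f).2 hj

include hc in
lemma exists_isOpenImmersion_isImmersion_pullback_fst
    [∀ {i j} (φ : i ⟶ j), IsAffineHom (E.map φ).left]
    [LocallyOfFiniteType f] [QuasiCompact f] [QuasiSeparated f]
    [IsImmersion (pullback.fst c.pt.hom f)] (x : ↥(pullback c.pt.hom f)) :
    ∃ (i : I) (W : Scheme.{0}) (w : W ⟶ (E.obj i).left) (_ : IsOpenImmersion w),
      (c.π.app i).left (pullback.fst c.pt.hom f x) ∈ w.opensRange ∧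
        IsImmersion (pullback.fst (w ≫ (E.obj i).hom) f) := by
  have {i j : I} (φ : i ⟶ j) : IsAffineHom ((E ⋙ Over.forget Z).map φ) :=
    inferInstanceAs (IsAffineHom (E.map φ).left)
  let g := pullback.fst c.pt.hom f
  obtain ⟨_, ⟨i, V, hV, rfl⟩, hxV, hVg⟩ := TopologicalSpace.Opens.isBasis_iff_nbhd.1
    (isBasis_preimage_isAffineOpen (E ⋙ Over.forget Z) _ (isLimitOfPreserves (Over.forget Z) hc))
    (show g x ∈ g.coborderRange from subset_coborder ⟨x, rfl⟩)
  change (E.obj i).left.Opens at V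
  have : IsAffine V := hV
  have hn (y) : pullback.fst (c.π.app i).left V.ι y ∈ g.coborderRange := by
    refine hVg ?_
    change ((pullback.fst (c.π.app i).left V.ι) ≫ (c.π.app i).left) y ∈ V
    rw [pullback.condition]
    exact (pullback.snd (c.π.app i).left V.ι y).2
  obtain ⟨j, φ, hj⟩ := exists_isClosedImmersion_pullback_fst_comp hc f V.ι
    ((pullback_fst_comp_iff @IsClosedImmersion _ _ f).2
      (isClosedImmersion_pullback_fst_of_forall_mem_coborderRange _ g hn))
  refine ⟨j, _, pullback.fst (E.map φ).left V.ι, inferInstance, ?_, inferInstance⟩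
  rw [Scheme.Hom.opensRange_pullbackFst, Scheme.Opens.opensRange_ι]
  change ((c.π.app j).left ≫ (E.map φ).left) (g x) ∈ V
  rw [← Over.comp_left, c.w]
  exact hxV

lemma exists_forall_exists_map_mem {D : I ⥤ Scheme.{0}} {c : Cone D} (hc : IsLimit c)
    [∀ i, CompactSpace (D.obj i)] [∀ {i j} (φ : i ⟶ j), IsAffineHom (D.map φ)] {i : c.pt → I}
    {U : ∀ x, (D.obj (i x)).Opens} (hU : ∀ x, c.π.app (i x) x ∈ U x) :
    ∃ k, ∀ y : D.obj k, ∃ (x : c.pt) (φ : k ⟶ i x), D.map φ y ∈ U x := by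
  classical
  have : CompactSpace c.pt := Scheme.compactSpace_of_isLimit _ _ hc
  let V (x : c.pt) : c.pt.Opens := c.π.app (i x) ⁻¹ᵁ U x
  obtain ⟨t, ht⟩ := CompactSpace.elim_nhds_subcover (fun x ↦ (V x : Set c.pt))
    fun x ↦ (V x).isOpen.mem_nhds (hU x)
  obtain ⟨j, hj⟩ := IsCofiltered.inf_objs_exists (t.image i)
  let φ (x : t) : j ⟶ i x := (hj (Finset.mem_image_of_mem i x.2)).some
  obtain ⟨k, ψ, hψ⟩ := exists_map_eq_top D c hc (⨆ x : t, D.map (φ x) ⁻¹ᵁ U x) <| by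
    refine top_unique fun (y : c.pt) _ ↦ ?_
    obtain ⟨x, hx, hy⟩ := Set.mem_iUnion₂.1 (ht.ge (Set.mem_univ y))
    refine TopologicalSpace.Opens.mem_iSup.2 ⟨⟨x, hx⟩, ?_⟩
    change (c.π.app j ≫ D.map (φ ⟨x, hx⟩)) y ∈ U x
    rwa [c.w]
  refine ⟨k, fun y ↦ ?_⟩
  obtain ⟨x, hx⟩ := TopologicalSpace.Opens.mem_iSup.1
    (hψ ▸ TopologicalSpace.Opens.mem_top y : y ∈ D.map ψ ⁻¹ᵁ _)
  refine ⟨x, ψ ≫ φ x, ?_⟩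
  rw [D.map_comp]
  exact hx

include hc in
theorem exists_isImmersion_pullback_fst [∀ i, CompactSpace (E.obj i).left]
    [∀ {i j} (φ : i ⟶ j), IsAffineHom (E.map φ).left]
    [LocallyOfFiniteType f] [QuasiCompact f] [QuasiSeparated f]
    [IsImmersion (pullback.fst c.pt.hom f)] :
    ∃ i, IsImmersion (pullback.fst (E.obj i).hom f) := by
  let D := E ⋙ Over.pullback f ⋙ Over.forget X
  have {i j : I} (φ : i ⟶ j) : IsAffineHom (D.map φ) :=
    isAffineHom_over_pullback_map_left (E.map φ) f
  have (i : I) : CompactSpace (D.obj i) := compactSpace_pullback (E.obj i).hom f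
  choose i W w hw hxw himm using exists_isOpenImmersion_isImmersion_pullback_fst hc f
  let U (x : ↥(pullback c.pt.hom f)) : (pullback (E.obj (i x)).hom f).Opens :=
    pullback.fst (E.obj (i x)).hom f ⁻¹ᵁ (w x).opensRange
  have hU (x : ↥(pullback c.pt.hom f)) : ((Over.pullback f).map (c.π.app (i x))).left x ∈ U x := by
    change (((Over.pullback f).map (c.π.app (i x))).left ≫ pullback.fst (E.obj (i x)).hom f) x ∈
      (w x).opensRange
    rw [over_pullback_map_left_fst]
    exact hxw x
  obtain ⟨k, hk⟩ := exists_forall_exists_map_mem (D := D)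
    (isLimitOfPreserves (Over.pullback f ⋙ Over.forget X) hc) (i := i) (U := U) hU
  refine ⟨k, isImmersion_of_forall_exists_pullback_snd _ fun y ↦ ?_⟩
  obtain ⟨x, φ, hy⟩ := hk y
  change ↥(pullback c.pt.hom f) at x
  have := hw x
  have : MorphismProperty.RespectsIso @IsImmersion :=
    IsImmersion.isStableUnderBaseChange.respectsIso
  refine ⟨_, pullback.fst (E.map φ).left (w x), inferInstance, ?_, ?_⟩
  · change (((Over.pullback f).map (E.map φ)).left ≫ pullback.fst (E.obj (i x)).hom f) y ∈
      (w x).opensRange at hy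
    rw [over_pullback_map_left_fst] at hy
    rwa [Scheme.Hom.opensRange_pullbackFst]
  · rw [← MorphismProperty.cancel_left_of_respectsIso @IsImmersion (pullbackSymmetry _ _).hom,
      pullbackSymmetry_hom_comp_snd, ← pullback_fst_comp_iff @IsImmersion, ← Over.w (E.map φ),
      pullback.condition_assoc]
    exact pullback_fst_comp @IsImmersion _ _ f (himm x)

end Limits

/-! ### Spreading out quasi-projectivity -/

section FGSubalgebra

variable (R K : Type) [CommRing R] [CommRing K] [Algebra R K]

/-- The finitely generated `R`-subalgebras of `K`, a directed system with union `K`. -/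
abbrev FGSubalgebra : Type := {A : Subalgebra R K // A.FG}

instance : IsDirectedOrder (FGSubalgebra R K) :=
  ⟨fun A B ↦ ⟨⟨A.1 ⊔ B.1, A.2.sup B.2⟩, le_sup_left (a := A.1), le_sup_right (a := A.1)⟩⟩

instance : Nonempty (FGSubalgebra R K) := ⟨⟨⊥, Subalgebra.fg_bot⟩⟩

namespace FGSubalgebra

/-- The inclusion diagram of the finitely generated `R`-subalgebras of `K`. -/
def diagram : FGSubalgebra R K ⥤ CommRingCat.{0} where
  obj A := .of A.1
  map h := CommRingCat.ofHom (Subalgebra.inclusion h.le).toRingHom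

/-- The inclusions into `K`, as a cocone over `FGSubalgebra.diagram`. -/
def cocone : Cocone (diagram R K) where
  pt := .of K
  ι := { app A := CommRingCat.ofHom A.1.val.toRingHom }

/-- `K` is the filtered colimit of its finitely generated `R`-subalgebras. -/
def isColimit : IsColimit (cocone R K) :=
  have : ReflectsColimitsOfShape (FGSubalgebra R K) (forget CommRingCat.{0}) :=
    reflectsColimitsOfShape_of_reflectsIsomorphisms
  isColimitOfReflects (forget CommRingCat.{0}) <| Types.FilteredColimit.isColimitOf' _ _
    (fun (x : K) ↦ ⟨⟨Algebra.adjoin R {x}, by simpa using Subalgebra.fg_adjoin_finset {x}⟩,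
      (⟨x, Algebra.self_mem_adjoin_singleton R x⟩ : Algebra.adjoin R {x}), rfl⟩)
    fun A _ _ h ↦ ⟨A, 𝟙 A, congrArg _ (Subtype.ext h)⟩

/-- The structure morphisms to `Spec R` of the spectra of the finitely generated `R`-subalgebras
of `K`. -/
def specStructure : (diagram R K).op ⋙ Scheme.Spec ⟶ (Functor.const _).obj (Spec (.of R)) where
  app A := specMap (algebraMap R A.unop.1)
  naturality _ _ h := (specMap_comp _ (Subalgebra.inclusion h.unop.le).toRingHom).symm

/-- The spectra of the finitely generated `R`-subalgebras of `K`, as schemes over `Spec R`. -/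
def specDiagram : (FGSubalgebra R K)ᵒᵖ ⥤ Over (Spec (.of R)) :=
  Over.lift _ (specStructure R K)

instance {A B : (FGSubalgebra R K)ᵒᵖ} (h : A ⟶ B) : IsAffineHom ((specDiagram R K).map h).left :=
  inferInstanceAs (IsAffineHom (specMap (Subalgebra.inclusion h.unop.le).toRingHom))

/-- The cone over `FGSubalgebra.specDiagram` with apex `Spec K`. -/
def specCone : Cone (specDiagram R K) :=
  Over.liftCone _ (specStructure R K) (Scheme.Spec.mapCone (cocone R K).op)
    (specMap (algebraMap R K)) fun A ↦ (specMap_comp _ A.unop.1.val.toRingHom).symm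

/-- `Spec K` is the limit of the spectra of the finitely generated `R`-subalgebras of `K`. -/
def isLimit : IsLimit (specCone R K) :=
  Over.isLimitLiftCone _ _ _ _ _ (isLimitOfPreserves Scheme.Spec (isColimit R K).op)

end FGSubalgebra

end FGSubalgebra

namespace ProjSpace

lemma algebraMap_homogeneousSubmodule_zero_surjective (R : Type) [CommRing R] (n : ℕ) :
    Function.Surjective (algebraMap R (MvPolynomial.homogeneousSubmodule (Fin (n + 1)) R 0)) := by
  rintro ⟨p, hp⟩
  obtain ⟨r, hr⟩ := Submodule.mem_one.1 <|
    (MvPolynomial.homogeneousSubmodule_zero (σ := Fin (n + 1)) (R := R)).le hp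
  exact ⟨r, Subtype.ext hr⟩

instance (R : Type) [CommRing R] (n : ℕ) : IsProper (structMap R n) := by
  have : Algebra.FiniteType (MvPolynomial.homogeneousSubmodule (Fin (n + 1)) R 0)
      (MvPolynomial (Fin (n + 1)) R) :=
    RingHom.finiteType_algebraMap.1 <| RingHom.FiniteType.of_comp_finiteType
      (f := algebraMap R _) (RingHom.finiteType_algebraMap.2 inferInstance)
  have : IsClosedImmersion (specMap
      (algebraMap R (MvPolynomial.homogeneousSubmodule (Fin (n + 1)) R 0))) :=
    IsClosedImmersion.spec_of_surjective _ (algebraMap_homogeneousSubmodule_zero_surjective R n)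
  have : IsProper (specMap
      (algebraMap R (MvPolynomial.homogeneousSubmodule (Fin (n + 1)) R 0))) := inferInstance
  exact MorphismProperty.comp_mem @IsProper _ _
    (inferInstanceAs (IsProper (Proj.toSpecZero _))) this

instance (R : Type) [CommRing R] (n : ℕ) : LocallyOfFinitePresentation (structMap R n) :=
  have : LocallyOfFinitePresentation (structMap ℤ n) := inferInstance
  MorphismProperty.of_isPullback (isPullback_map (A := ℤ) (B := R)) this

lemma map_comp_map (A B C : Type) [CommRing A] [CommRing B] [CommRing C] [Algebra A B]
    [Algebra B C] [Algebra A C] [IsScalarTower A B C] (n : ℕ) :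
    map B C n ≫ map A B n = map A C n := by
  refine (Proj.map_comp _ _ _ _).symm.trans ?_
  have : (gradingMap B C n).comp (gradingMap A B n) = gradingMap A C n := by
    refine GradedRingHom.ext fun p ↦ ?_
    change MvPolynomial.map _ (MvPolynomial.map _ p) = MvPolynomial.map _ p
    rw [MvPolynomial.map_map, ← IsScalarTower.algebraMap_eq]
  congr 1

end ProjSpace

section

open FGSubalgebra

attribute [local instance] IsCofiltered.isConnected

variable {R K : Type} [CommRing R] [CommRing K] [Algebra R K] {X Y Y' Z P : Scheme.{0}}

lemma exists_fg_isImmersion_pullback_fst (z : Z ⟶ Spec (.of R)) (f : X ⟶ Z) [QuasiCompact z]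
    [LocallyOfFiniteType f] [QuasiCompact f] [QuasiSeparated f]
    (h : IsImmersion (pullback.fst (pullback.snd (specMap (algebraMap R K)) z) f)) :
    ∃ A : Subalgebra R K, A.FG ∧
      IsImmersion (pullback.fst (pullback.snd (specMap (algebraMap R A)) z) f) := by
  let E := specDiagram R K ⋙ Over.pullback z
  have (A : (FGSubalgebra R K)ᵒᵖ) : CompactSpace (E.obj A).left :=
    compactSpace_pullback (specMap (algebraMap R A.unop.1)) z
  have {A B : (FGSubalgebra R K)ᵒᵖ} (h : A ⟶ B) : IsAffineHom (E.map h).left :=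
    isAffineHom_over_pullback_map_left ((specDiagram R K).map h) z
  have : IsImmersion (pullback.fst ((Over.pullback z).mapCone (specCone R K)).pt.hom f) := h
  obtain ⟨A, hA⟩ := exists_isImmersion_pullback_fst (E := E)
    (isLimitOfPreserves (Over.pullback z) (isLimit R K)) f
  exact ⟨A.unop.1, A.unop.2, hA⟩

lemma ProjSpace.exists_fg_isImmersion_pullback_snd_map {n : ℕ} (F : X ⟶ ProjSpace R n)
    {ρ : Y ⟶ X} {f : Y ⟶ ProjSpace K n} (H : IsPullback ρ f F (ProjSpace.map R K n))
    [IsImmersion f] (hF₁ : LocallyOfFiniteType (F ≫ ProjSpace.structMap R n))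
    (hF₂ : QuasiCompact (F ≫ ProjSpace.structMap R n))
    (hF₃ : QuasiSeparated (F ≫ ProjSpace.structMap R n)) :
    ∃ A : Subalgebra R K, A.FG ∧ IsImmersion (pullback.snd F (ProjSpace.map R A n)) := by
  have := locallyOfFiniteType_of_comp F (ProjSpace.structMap R n)
  have := QuasiCompact.of_comp F (ProjSpace.structMap R n)
  have := QuasiSeparated.of_comp F (ProjSpace.structMap R n)
  obtain ⟨A, hA, hAF⟩ := exists_fg_isImmersion_pullback_fst (ProjSpace.structMap R n) F <|
    (pullback_fst_pullback_snd_iff @IsImmersion isPullback_map H).2 ‹_›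
  exact ⟨A, hA, (pullback_fst_pullback_snd_iff @IsImmersion isPullback_map
    (.of_hasPullback _ _)).1 hAF⟩

lemma exists_fg_comp_eq (q : Y ⟶ Spec (.of R)) [QuasiCompact q] [QuasiSeparated q]
    (r : P ⟶ Spec (.of R)) [LocallyOfFinitePresentation r]
    (g : pullback (specMap (algebraMap R K)) q ⟶ P) (hg : g ≫ r = pullback.snd _ _ ≫ q) :
    ∃ A : Subalgebra R K, A.FG ∧ ∃ (ρ : pullback (specMap (algebraMap R K)) q ⟶
      pullback (specMap (algebraMap R A)) q) (g' : pullback (specMap (algebraMap R A)) q ⟶ P),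
        IsPullback ρ (pullback.fst _ _) (pullback.fst _ _) (specMap (algebraMap A K)) ∧
          ρ ≫ g' = g ∧ g' ≫ r = pullback.snd _ _ ≫ q := by
  let F : Over (Spec (.of R)) ⥤ Scheme.{0} := Over.pullback q ⋙ Over.forget Y
  let D := specDiagram R K ⋙ F
  have (A : (FGSubalgebra R K)ᵒᵖ) : CompactSpace (D.obj A) :=
    compactSpace_pullback (specMap (algebraMap R A.unop.1)) q
  have (A : (FGSubalgebra R K)ᵒᵖ) : QuasiSeparatedSpace (D.obj A) :=
    quasiSeparatedSpace_pullback (specMap (algebraMap R A.unop.1)) q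
  have {A B : (FGSubalgebra R K)ᵒᵖ} (h : A ⟶ B) : IsAffineHom (D.map h) :=
    isAffineHom_over_pullback_map_left ((specDiagram R K).map h) q
  let t : D ⟶ (Functor.const _).obj (Spec (.of R)) :=
    { app A := pullback.snd (specMap (algebraMap R A.unop.1)) q ≫ q
      naturality A B h := (Category.assoc _ _ _).symm.trans
        (congrArg (· ≫ q) (over_pullback_map_left_snd ((specDiagram R K).map h) q)) }
  obtain ⟨A, g', hg', hr⟩ := Scheme.exists_π_app_comp_eq_of_locallyOfFinitePresentation D t r
    (F.mapCone (specCone R K)) (isLimitOfPreserves F (isLimit R K)) g <| by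
      ext A : 2
      exact ((Category.assoc _ _ _).symm.trans (congrArg (· ≫ q)
        (over_pullback_map_left_snd ((specCone R K).π.app A) q))).trans hg.symm
  exact ⟨A.unop.1, A.unop.2, F.map ((specCone R K).π.app A), g',
    isPullback_over_pullback_map_left ((specCone R K).π.app A) q, hg', hr⟩

lemma QuasiProjectiveOver.of_isPullback {S : Scheme.{0}} {s : Spec (.of K) ⟶ S} {y : Y ⟶ S}
    {a : X ⟶ Y} {p : X ⟶ Spec (.of K)} {a' : Y' ⟶ Y} {p' : Y' ⟶ Spec (.of K)}
    (H : IsPullback a p y s) (H' : IsPullback a' p' y s) (hp : QuasiProjectiveOver K p) :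
    QuasiProjectiveOver K p' := by
  obtain ⟨n, f, _, hf⟩ := hp
  refine ⟨n, (H'.isoIsPullback _ _ H).hom ≫ f, inferInstance, ?_⟩
  rw [Category.assoc, hf, IsPullback.isoIsPullback_hom_snd]

theorem QuasiProjectiveOver.exists_finiteType (q : Y ⟶ Spec (.of R)) [LocallyOfFiniteType q]
    [QuasiCompact q] [QuasiSeparated q]
    (hq : QuasiProjectiveOver K (pullback.fst (specMap (algebraMap R K)) q)) :
    ∃ (A : Type) (_ : CommRing A) (_ : Algebra R A), Algebra.FiniteType R A ∧
      Nonempty (A →ₐ[R] K) ∧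
        QuasiProjectiveOver A (pullback.fst (specMap (algebraMap R A)) q) := by
  obtain ⟨n, f, _, hf⟩ := hq
  obtain ⟨A, hA, ρ, g, hρ, hg, hgq⟩ := exists_fg_comp_eq q (ProjSpace.structMap R n)
    (f ≫ ProjSpace.map R K n) <| by
      rw [Category.assoc, ProjSpace.map_structMap, reassoc_of% hf, pullback.condition]
  obtain ⟨F, hFg, hF⟩ := (ProjSpace.isPullback_map (A := R) (B := A) (n := n)).exists_lift g
    (pullback.fst _ _) (hgq.trans pullback.condition.symm)
  have hρF : IsPullback ρ f F (ProjSpace.map A K n) := by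
    refine .of_bot (by rwa [hf, hF]) ?_ ProjSpace.isPullback_map
    refine (ProjSpace.isPullback_map (A := R) (B := A)).hom_ext ?_ ?_
    · rw [Category.assoc, hFg, hg, Category.assoc, ProjSpace.map_comp_map]
    · rw [Category.assoc, hF, hρ.w, Category.assoc, ProjSpace.map_structMap, reassoc_of% hf]
  obtain ⟨B, hB, hBF⟩ := ProjSpace.exists_fg_isImmersion_pullback_snd_map F hρF (hF ▸ inferInstance)
    (hF ▸ inferInstance) (hF ▸ inferInstance)
  have h : IsPullback (pullback.fst F (ProjSpace.map A B n))
      (pullback.snd F (ProjSpace.map A B n) ≫ ProjSpace.structMap B n) (pullback.fst _ q)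
      (specMap (algebraMap A B)) :=
    hF ▸ (IsPullback.of_hasPullback F _).paste_vert ProjSpace.isPullback_map
  have hB' := h.paste_horiz (IsPullback.of_hasPullback (specMap (algebraMap R A)) q).flip
  rw [← specMap_comp, ← IsScalarTower.algebraMap_eq] at hB'
  have := A.fg_iff_finiteType.1 hA
  have := B.fg_iff_finiteType.1 hB
  exact ⟨B, inferInstance, inferInstance, .trans (S := A) ‹_› ‹_›, ⟨B.val.restrictScalars R⟩,
    .of_isPullback hB' (IsPullback.of_hasPullback _ _).flip ⟨n, _, hBF, rfl⟩⟩

end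

namespace QuasiProjectiveOver

lemma of_algHom {R A B : Type} [CommRing R] [CommRing A] [CommRing B] [Algebra R A] [Algebra R B]
    (φ : A →ₐ[R] B) {Y : Scheme.{0}} {q : Y ⟶ Spec (.of R)}
    (hq : QuasiProjectiveOver A (pullback.fst (specMap (algebraMap R A)) q)) :
    QuasiProjectiveOver B (pullback.fst (specMap (algebraMap R B)) q) := by
  algebraize [φ.toRingHom]
  have h := IsPullback.of_hasPullback (pullback.fst (specMap (algebraMap R A)) q)
    (specMap (algebraMap A B))
  have hB := h.paste_horiz (IsPullback.of_hasPullback (specMap (algebraMap R A)) q).flip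
  rw [← specMap_comp, ← IsScalarTower.algebraMap_eq] at hB
  exact .of_isPullback hB (IsPullback.of_hasPullback _ _).flip (hq.baseChange h)

lemma locallyOfFiniteType {R : Type} [CommRing R] {Y : Scheme.{0}} {q : Y ⟶ Spec (.of R)}
    (hq : QuasiProjectiveOver R q) : LocallyOfFiniteType q := by
  obtain ⟨n, f, _, rfl⟩ := hq
  infer_instance

lemma noetherianSpace {R : Type} [CommRing R] [IsNoetherianRing R] {Y : Scheme.{0}}
    {q : Y ⟶ Spec (.of R)} (hq : QuasiProjectiveOver R q) : TopologicalSpace.NoetherianSpace Y := by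
  obtain ⟨n, f, _, -⟩ := hq
  have : IsNoetherian (ProjSpace R n) :=
    { toIsLocallyNoetherian := LocallyOfFiniteType.isLocallyNoetherian (ProjSpace.structMap R n)
      toCompactSpace := QuasiCompact.compactSpace_of_compactSpace (ProjSpace.structMap R n) }
  exact f.isEmbedding.isInducing.noetherianSpace

section FaithfullyFlat

variable {A B : Type} [CommRing A] [CommRing B] [Algebra A B] [Module.FaithfullyFlat A B]
  {Y Y' : Scheme.{0}} {q : Y ⟶ Spec (.of A)} {q' : Y' ⟶ Spec (.of B)} {π : Y' ⟶ Y}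

lemma locallyOfFiniteType_of_isPullback (H : IsPullback π q' q (specMap (algebraMap A B)))
    (hq : QuasiProjectiveOver B q') : LocallyOfFiniteType q :=
  have ⟨_, _⟩ := flat_and_surjective_specMap A B
  MorphismProperty.of_isPullback_of_descendsAlong
    (Q := (@Surjective ⊓ @Flat ⊓ @QuasiCompact : MorphismProperty Scheme.{0}))
    H.flip ⟨⟨‹_›, ‹_›⟩, inferInstance⟩ hq.locallyOfFiniteType

lemma noetherianSpace_of_isPullback [IsNoetherianRing B]
    (H : IsPullback π q' q (specMap (algebraMap A B))) (hq : QuasiProjectiveOver B q') :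
    TopologicalSpace.NoetherianSpace Y := by
  have := hq.noetherianSpace
  have : Surjective π :=
    MorphismProperty.of_isPullback H.flip (flat_and_surjective_specMap A B).2
  exact TopologicalSpace.noetherianSpace_of_surjective π π.continuous π.surjective

end FaithfullyFlat

end QuasiProjectiveOver

lemma exists_isGalois_algHom (k A : Type) [Field k] [PerfectField k] [CommRing A] [Nontrivial A]
    [Algebra k A] [Algebra.FiniteType k A] :
    ∃ (L : Type) (_ : Field L) (_ : Algebra k L), FiniteDimensional k L ∧ IsGalois k L ∧
      Nonempty (A →ₐ[k] L) := by
  obtain ⟨m, hm⟩ := Ideal.exists_maximal A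
  let : Field (A ⧸ m) := Ideal.Quotient.field m
  have : Module.Finite k (A ⧸ m) := finite_of_finite_type_of_isJacobsonRing k (A ⧸ m)
  let φ : (A ⧸ m) →ₐ[k] AlgebraicClosure k := IsAlgClosed.lift
  let L := IntermediateField.normalClosure k (A ⧸ m) (AlgebraicClosure k)
  have hφL : φ.fieldRange ≤ L := AlgHom.fieldRange_le_normalClosure φ
  exact ⟨L, inferInstance, inferInstance, inferInstance, IsGalois.mk,
    ⟨((IntermediateField.inclusion hφL).comp φ.rangeRestrict).comp (Ideal.Quotient.mkₐ k m)⟩⟩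

theorem quasiProjective_descends_along_field_extension_general {k K : Type} [Field k]
    [PerfectField k] [Infinite k] [Field K] [Algebra k K] {Y Y' : Scheme.{0}}
    {q : Y ⟶ Spec (.of k)} {q' : Y' ⟶ Spec (.of K)} {π : Y' ⟶ Y}
    (H : IsPullback π q' q (specMap (algebraMap k K))) (hq : QuasiProjectiveOver K q') :
    QuasiProjectiveOver k q := by
  have := QuasiProjectiveOver.locallyOfFiniteType_of_isPullback H hq
  have := QuasiProjectiveOver.noetherianSpace_of_isPullback H hq
  have : QuasiSeparatedSpace Y := inferInstance
  obtain ⟨A, _, _, _, ⟨φ⟩, hA⟩ := QuasiProjectiveOver.exists_finiteType q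
    (.of_isPullback H (IsPullback.of_hasPullback _ _).flip hq)
  have : Nontrivial A := φ.toRingHom.domain_nontrivial
  obtain ⟨L, _, _, _, _, ⟨ψ⟩⟩ := exists_isGalois_algHom k A
  have : Infinite L := .of_injective _ (algebraMap k L).injective
  exact .of_isGalois (IsPullback.of_hasPullback _ _).flip (hA.of_algHom ψ)

/-- Descent of quasi-projectivity along field extensions in characteristic zero:
if the base change of a `k`-scheme `Y` to a field extension `K` of `k` is quasi-projective
over `K`, then `Y` is quasi-projective over `k`. -/
theorem quasiProjective_descends_along_field_extension
    (k K : Type) [Field k] [CharZero k] [Field K] [Algebra k K]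
    (Y : Scheme) (q : Y ⟶ Spec (CommRingCat.of k))
    (h : QuasiProjectiveOver K
      (pullback.snd q (Spec.map (CommRingCat.ofHom (algebraMap k K))))) :
    QuasiProjectiveOver k q :=
  quasiProjective_descends_along_field_extension_general (IsPullback.of_hasPullback _ _) h

end Paper
end
end

section
/- Complement of a dense affine open has pure codimension one: Let X be a separated irreducible noetherian scheme, and let U be an open dense subset of X such that U (with its open subscheme structure) is affine. Then the closed complement X ∖ U has pure codimension one in X, that is, every irreducible component of X ∖ U has codimension one in X. -/
/-!
Localize at the generic point `t` of `T`: with `A` the local ring at `t` and `𝔪` its maximal ideal,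
the punctured spectrum `Spec A ∖ {𝔪}` is the preimage of `U`, hence an affine scheme `Spec B`, and
`𝔪 B = B`. Write `B ⧸ A` for the cokernel of `A → B`. Since `A → B` becomes an isomorphism after
inverting any `f ∈ 𝔪`, every element of `B ⧸ A` is killed by a power of `f`. Choose `x ∈ 𝔪` that is
a nonzerodivisor on `B`: multiplication by `x` embeds the preimage in `B` of the `x`-torsion of
`B ⧸ A` into the image of `A`, so this torsion has finite length, and Melkersson's criterion makes
`B ⧸ A` Artinian. As `𝔪 (B ⧸ A) = B ⧸ A`, prime avoidance over the finitely many maximal attached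
primes gives `r ∈ 𝔪` acting surjectively on `B ⧸ A`. Were `r` in a maximal ideal `P` of `B`, then
`A → B ⧸ P` would be surjective with kernel `𝔪`, contradicting `𝔪 B = B`. Thus `r` is a unit in
`B`, so the closed point of `Spec A` is the zero locus of `r`, and `dim A ≤ 1` by Krull's principal
ideal theorem. By density of `U`, the point `t` has a proper generization, so `dim A ≥ 1`.
-/

open AlgebraicGeometry CategoryTheory

theorem wellFoundedGT_orderHom_nat (α : Type*) [PartialOrder α] [WellFoundedGT α] :
    WellFoundedGT (ℕ →o α) := by
  rw [wellFoundedGT_iff_monotone_chain_condition]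
  intro f
  have stabilizes (g : ℕ →o α) := wellFoundedGT_iff_monotone_chain_condition.1 ‹_› g
  obtain ⟨k, hk⟩ := stabilizes ⟨fun n ↦ f n n, fun i j h ↦ (f.mono h i).trans ((f j).mono h)⟩
  choose i hi using fun n ↦ stabilizes ⟨fun j ↦ f j n, fun _ _ h ↦ f.mono h n⟩
  refine ⟨(Finset.range k).sup i ⊔ k, fun j hj ↦ OrderHom.ext _ _ (funext fun n ↦ ?_)⟩
  rcases lt_or_ge n k with hn | hn
  · have hin : i n ≤ (Finset.range k).sup i ⊔ k :=
      (Finset.le_sup (f := i) (Finset.mem_range.2 hn)).trans le_sup_left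
    exact (hi n _ hin).symm.trans (hi n j (hin.trans hj))
  · refine le_antisymm (f.mono hj n) ?_
    calc f j n ≤ f (j ⊔ n) (j ⊔ n) :=
          (f.mono le_sup_left n).trans ((f _).mono le_sup_right)
      _ = f k k := (hk _ (hn.trans le_sup_right)).symm
      _ ≤ f _ n := (f.mono le_sup_right k).trans ((f _).mono hn)

section Artinian

variable {R M : Type*} [CommRing R] [AddCommGroup M] [Module R M]

/-- The descending sequence `n ↦ x ^ n L ∩ M[x]` of submodules of the `x`-torsion `M[x]`; for
`x`-power torsion modules it plays the role that leading coefficients play in Hilbert's basis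
theorem. -/
def torsionTrace (x : R) (L : Submodule R M) :
    ℕ →o (Submodule R (Submodule.torsionBy R M x))ᵒᵈ where
  toFun n := .toDual ((L.map (LinearMap.lsmul R M (x ^ n))).submoduleOf _)
  monotone' i j hij := by
    rintro s ⟨l, hl, hls⟩
    refine ⟨x ^ (j - i) • l, L.smul_mem _ hl, ?_⟩
    rw [← hls, LinearMap.lsmul_apply, LinearMap.lsmul_apply, smul_smul, ← pow_add,
      Nat.add_sub_cancel' hij]

theorem mem_torsionTrace {x : R} {L : Submodule R M} {n : ℕ} {s : Submodule.torsionBy R M x} :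
    s ∈ (torsionTrace x L n).ofDual ↔ ∃ l ∈ L, x ^ n • l = s := Iff.rfl

theorem torsionTrace_antitone (x : R) : Antitone (torsionTrace (M := M) x) :=
  fun _ _ hL _ ↦ Submodule.comap_mono (Submodule.map_mono hL)

theorem eq_of_torsionTrace_eq {x : R} (hx : ∀ m : M, ∃ n : ℕ, x ^ n • m = 0)
    {L L' : Submodule R M} (hL : L ≤ L') (h : torsionTrace x L = torsionTrace x L') : L = L' := by
  have mem_of_pow_smul_eq_zero (n : ℕ) : ∀ l ∈ L', x ^ n • l = 0 → l ∈ L := by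
    induction n with
    | zero => exact fun l _ hl ↦ by simp_all
    | succ n ih =>
      intro l hl hxl
      have hs : x ^ n • l ∈ Submodule.torsionBy R M x := by
        rwa [Submodule.mem_torsionBy_iff, smul_smul, ← pow_succ']
      obtain ⟨l', hl', e⟩ : ∃ l' ∈ L, x ^ n • l' = x ^ n • l :=
        mem_torsionTrace (s := ⟨_, hs⟩).1 (h ▸ mem_torsionTrace.2 ⟨l, hl, rfl⟩)
      have hsub : l - l' ∈ L := ih _ (L'.sub_mem hl (hL hl')) (by rw [smul_sub, e, sub_self])
      exact (Submodule.sub_mem_iff_left L hl').1 hsub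
  refine le_antisymm hL fun l hl ↦ ?_
  obtain ⟨n, hn⟩ := hx l
  exact mem_of_pow_smul_eq_zero n l hl hn

theorem isArtinian_of_isArtinian_torsionBy (x : R) (hx : ∀ m : M, ∃ n : ℕ, x ^ n • m = 0)
    [IsArtinian R (Submodule.torsionBy R M x)] : IsArtinian R M := by
  have := wellFoundedGT_orderHom_nat (Submodule R (Submodule.torsionBy R M x))ᵒᵈ
  have hanti : StrictAnti (torsionTrace (M := M) x) := fun _ _ hL ↦
    (torsionTrace_antitone x hL.le).lt_of_ne' fun h ↦ hL.ne (eq_of_torsionTrace_eq hx hL.le h)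
  exact hanti.wellFoundedLT

theorem isArtinian_of_forall_mem_support_isMaximal [IsNoetherianRing R] [Module.Finite R M]
    (h : ∀ p ∈ Module.support R M, p.asIdeal.IsMaximal) : IsArtinian R M := by
  set I := Module.annihilator R M
  have : Ring.KrullDimLE 0 (R ⧸ I) := Ring.krullDimLE_zero_iff.2 fun P hP ↦ by
    have hmem : (⟨P.comap (Ideal.Quotient.mk I), inferInstance⟩ : PrimeSpectrum R) ∈
        Module.support R M := by
      rw [Module.support_eq_zeroLocus]
      exact I.mk_ker.ge.trans (Ideal.comap_mono bot_le)
    have := h _ hmem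
    exact Ideal.isMaximal_of_isIntegral_of_isMaximal_comap P this
  have : IsArtinianRing (R ⧸ I) := isArtinianRing_iff_krullDimLE_zero.2 this
  have htor : Module.IsTorsionBySet R M I := Module.isTorsionBySet_annihilator R M
  let _ := htor.module
  have := htor.isScalarTower (S := R)
  have : Module.Finite (R ⧸ I) M := .of_restrictScalars_finite R _ _
  exact isArtinian_of_surjective_algebraMap (R := R ⧸ I) Ideal.Quotient.mk_surjective

theorem finite_torsionBy_quotient (N : Submodule R M) [IsNoetherian R N] {x : R}
    (hx : IsSMulRegular M x) : Module.Finite R (Submodule.torsionBy R (M ⧸ N) x) := by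
  let L : Submodule R M := N.comap (LinearMap.lsmul R M x)
  have : IsNoetherian R L :=
    isNoetherian_of_injective ((LinearMap.lsmul R M x).restrict fun _ h ↦ h : L →ₗ[R] N)
      fun _ _ h ↦ Subtype.ext (hx (congrArg Subtype.val h))
  have hL : Submodule.torsionBy R (M ⧸ N) x = L.map N.mkQ := by
    refine (Submodule.map_comap_eq_of_surjective N.mkQ_surjective _).symm.trans (congrArg _ ?_)
    ext m
    exact Submodule.Quotient.mk_eq_zero N
  rw [hL]
  infer_instance

theorem isArtinian_quotient_of_isMaximal [IsNoetherianRing R] (N : Submodule R M)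
    [IsNoetherian R N] (𝔪 : Ideal R) [h𝔪 : 𝔪.IsMaximal]
    (hN : ∀ m : M, ∀ f ∈ 𝔪, ∃ n : ℕ, f ^ n • m ∈ N) {x : R} (hx𝔪 : x ∈ 𝔪)
    (hx : IsSMulRegular M x) : IsArtinian R (M ⧸ N) := by
  have htors : ∀ f ∈ 𝔪, ∀ m : M ⧸ N, ∃ n : ℕ, f ^ n • m = 0 := fun f hf m ↦ by
    obtain ⟨m, rfl⟩ := N.mkQ_surjective m
    obtain ⟨n, hn⟩ := hN m f hf
    exact ⟨n, (Submodule.Quotient.mk_eq_zero N).2 hn⟩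
  have := finite_torsionBy_quotient N hx
  have : IsArtinian R (Submodule.torsionBy R (M ⧸ N) x) := by
    refine isArtinian_of_forall_mem_support_isMaximal fun p hp ↦ ?_
    obtain ⟨m, hm⟩ := Module.mem_support_iff_exists_annihilator.1 hp
    have hle : 𝔪 ≤ p.asIdeal := fun f hf ↦ by
      obtain ⟨n, hn⟩ := htors f hf m
      refine p.2.mem_of_pow_mem n (hm ?_)
      exact (Submodule.mem_annihilator_span_singleton _ _).2 (Subtype.ext hn)
    exact h𝔪.eq_of_le p.2.ne_top hle ▸ h𝔪
  exact isArtinian_of_isArtinian_torsionBy x (htors x hx𝔪)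

variable (R M) in
/-- The maximal elements among the annihilators of nonzero quotients of `M`, that is, the maximal
attached primes of `M`: for Artinian modules they are dual to the maximal associated primes. -/
def maximalAttachedPrimes : Set (Ideal R) :=
  {p | Maximal (fun I ↦ ∃ N : Submodule R M, N ≠ ⊤ ∧ N.colon Set.univ = I) p}

theorem mem_maximalAttachedPrimes {p : Ideal R} : p ∈ maximalAttachedPrimes R M ↔
    Maximal (fun I ↦ ∃ N : Submodule R M, N ≠ ⊤ ∧ N.colon Set.univ = I) p := Iff.rfl

theorem isPrime_of_mem_maximalAttachedPrimes {p : Ideal R} (hp : p ∈ maximalAttachedPrimes R M) :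
    p.IsPrime := by
  obtain ⟨⟨N, hN, rfl⟩, hmax⟩ := mem_maximalAttachedPrimes.1 hp
  refine ⟨fun h ↦ hN ?_, fun {a b} hab ↦ or_iff_not_imp_left.2 fun ha ↦ ?_⟩
  · simpa using h
  let N' := N.comap (LinearMap.lsmul R M a)
  have hN' : N' ≠ ⊤ := fun h ↦ ha <| Submodule.mem_colon.2 fun m _ ↦
    (h ▸ Submodule.mem_top : m ∈ N')
  have hle : N.colon Set.univ ≤ N'.colon Set.univ := Submodule.colon_mono
    (fun m hm ↦ N.smul_mem a hm) le_rfl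
  refine hmax ⟨N', hN', rfl⟩ hle (Submodule.mem_colon.2 fun m _ ↦ ?_)
  change a • b • m ∈ N
  rw [smul_smul]
  exact Submodule.mem_colon.1 hab m trivial

theorem finite_maximalAttachedPrimes [IsArtinian R M] : (maximalAttachedPrimes R M).Finite := by
  choose N hN using fun p : maximalAttachedPrimes R M ↦
    (mem_maximalAttachedPrimes.1 p.2).prop
  obtain ⟨s, hs⟩ := Finset.exists_inf_le N
  refine (s.finite_toSet.image Subtype.val).subset fun p hp ↦ ?_
  have := isPrime_of_mem_maximalAttachedPrimes hp
  have hinf : s.inf Subtype.val ≤ p := fun r hr ↦ by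
    have hcolon : ∀ q ∈ s, r ∈ (N q).colon Set.univ := fun q hq ↦
      (hN q).2.symm ▸ Submodule.mem_finsetInf.1 hr q hq
    suffices r ∈ (N ⟨p, hp⟩).colon Set.univ from (hN ⟨p, hp⟩).2.le this
    exact Submodule.mem_colon.2 fun m _ ↦ hs _ <| Submodule.mem_finsetInf.2 fun q hq ↦
      Submodule.mem_colon.1 (hcolon q hq) m (Set.mem_univ m)
  obtain ⟨q, hq, hqp⟩ := (Ideal.IsPrime.inf_le' this).1 hinf
  have hmax := mem_maximalAttachedPrimes.1 q.2
  exact ⟨q, hq, le_antisymm hqp (hmax.le_of_ge (mem_maximalAttachedPrimes.1 hp).prop hqp)⟩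

theorem exists_mem_maximalAttachedPrimes_of_not_surjective [IsNoetherianRing R] {r : R}
    (hr : ¬ Function.Surjective fun m : M ↦ r • m) : ∃ p ∈ maximalAttachedPrimes R M, r ∈ p := by
  let N := LinearMap.range (LinearMap.lsmul R M r)
  have hN : N ≠ ⊤ := fun h ↦ hr (LinearMap.range_eq_top.1 h)
  obtain ⟨p, hp, hmax⟩ := exists_maximal_ge_of_wellFoundedGT
    (fun I ↦ ∃ N : Submodule R M, N ≠ ⊤ ∧ N.colon Set.univ = I) (N.colon Set.univ) ⟨N, hN, rfl⟩
  exact ⟨p, hmax, hp (Submodule.mem_colon.2 fun m _ ↦ ⟨m, rfl⟩)⟩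

theorem exists_mem_smul_surjective_of_ideal_smul_top_eq_top [IsNoetherianRing R] [IsArtinian R M]
    {I : Ideal R} (hI : I • (⊤ : Submodule R M) = ⊤) :
    ∃ r ∈ I, Function.Surjective fun m : M ↦ r • m := by
  by_contra! h
  have hsub : (I : Set R) ⊆ ⋃ p ∈ maximalAttachedPrimes R M, p := fun r hr ↦ by
    simpa using exists_mem_maximalAttachedPrimes_of_not_surjective (h r hr)
  obtain ⟨p, hp, hIp⟩ := (Ideal.subset_union_prime_finite finite_maximalAttachedPrimes
    (f := id) ⊥ ⊥ fun p hp _ _ ↦ isPrime_of_mem_maximalAttachedPrimes hp).1 hsub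
  obtain ⟨N, hN, rfl⟩ := (mem_maximalAttachedPrimes.1 hp).prop
  refine hN (top_le_iff.1 (hI ▸ Submodule.smul_le.2 fun r hr m _ ↦ ?_))
  exact Submodule.mem_colon.1 (hIp hr) m trivial

end Artinian

section LocalAlgebra

variable {A B : Type*} [CommRing A] [CommRing B] [Algebra A B]

theorem exists_mem_algebraMap_mem_nonZeroDivisors [IsNoetherianRing B] {I : Ideal A}
    (hI : I.map (algebraMap A B) = ⊤) : ∃ x ∈ I, algebraMap A B x ∈ nonZeroDivisors B := by
  by_contra! h
  have hsub : (I : Set A) ⊆ ⋃ P ∈ associatedPrimes B B, P.comap (algebraMap A B) := fun x hx ↦ by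
    have := h x hx
    rw [← SetLike.mem_coe, ← Set.mem_compl_iff,
      ← biUnion_associatedPrimes_eq_compl_nonZeroDivisors] at this
    simpa using this
  obtain ⟨P, hP, hIP⟩ := (Ideal.subset_union_prime_finite (associatedPrimes.finite B B) ⊥ ⊥
    fun P hP _ _ ↦ have := hP.isPrime; inferInstance).1 hsub
  exact hP.isPrime.ne_top (top_le_iff.1 (hI ▸ Ideal.map_le_iff_le_comap.2 hIP))

theorem ideal_smul_top_quotient_eq_top {I : Ideal A} (hI : I.map (algebraMap A B) = ⊤)
    (N : Submodule A B) : I • (⊤ : Submodule A (B ⧸ N)) = ⊤ := by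
  have hB : I • (⊤ : Submodule A B) = ⊤ := by
    rw [Ideal.smul_top_eq_map, hI, Submodule.restrictScalars_top]
  calc I • (⊤ : Submodule A (B ⧸ N)) = (I • (⊤ : Submodule A B)).map N.mkQ := by
        rw [Submodule.map_smul'', Submodule.map_top, N.range_mkQ]
    _ = ⊤ := by rw [hB, Submodule.map_top, N.range_mkQ]

variable [IsLocalRing A]

theorem isUnit_algebraMap_of_smul_surjective
    (hm : (IsLocalRing.maximalIdeal A).map (algebraMap A B) = ⊤) {r : A}
    (hsurj : Function.Surjective
      fun b : B ⧸ LinearMap.range (Algebra.linearMap A B) ↦ r • b) :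
    IsUnit (algebraMap A B r) := by
  by_contra hu
  obtain ⟨P, hP, hrP⟩ := exists_max_ideal_of_mem_nonunits hu
  have hsurjP : Function.Surjective ((Ideal.Quotient.mk P).comp (algebraMap A B)) := fun b ↦ by
    obtain ⟨b, rfl⟩ := Ideal.Quotient.mk_surjective b
    obtain ⟨c, hc⟩ := hsurj (Submodule.Quotient.mk b)
    obtain ⟨c, rfl⟩ := Submodule.Quotient.mk_surjective _ c
    obtain ⟨a, ha⟩ : ∃ a, algebraMap A B a = r • c - b := (Submodule.Quotient.eq _).1 hc
    refine ⟨-a, Ideal.Quotient.eq.2 ?_⟩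
    rw [map_neg, ha, Algebra.smul_def, neg_sub, sub_sub_cancel_left]
    exact P.neg_mem (P.mul_mem_right c hrP)
  let _ := Ideal.Quotient.field P
  have hker := IsLocalRing.eq_maximalIdeal (RingHom.ker_isMaximal_of_surjective _ hsurjP)
  rw [← RingHom.comap_ker, Ideal.mk_ker] at hker
  exact hP.ne_top (top_le_iff.1 (hm ▸ Ideal.map_le_iff_le_comap.2 hker.ge))

theorem exists_mem_maximalIdeal_isUnit_algebraMap [IsNoetherianRing A] [IsNoetherianRing B]
    (hm : (IsLocalRing.maximalIdeal A).map (algebraMap A B) = ⊤)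
    (ht : ∀ b : B, ∀ f ∈ IsLocalRing.maximalIdeal A,
      ∃ (n : ℕ) (a : A), algebraMap A B f ^ n * b = algebraMap A B a) :
    ∃ r ∈ IsLocalRing.maximalIdeal A, IsUnit (algebraMap A B r) := by
  obtain ⟨x, hx, hxB⟩ := exists_mem_algebraMap_mem_nonZeroDivisors hm
  have hreg : IsSMulRegular B x := fun b c h ↦ by
    simpa [Algebra.smul_def, mul_cancel_left_mem_nonZeroDivisors hxB] using h
  let N := LinearMap.range (Algebra.linearMap A B)
  have : IsArtinian A (B ⧸ N) := by
    refine isArtinian_quotient_of_isMaximal N _ (fun b f hf ↦ ?_) hx hreg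
    obtain ⟨n, a, h⟩ := ht b f hf
    exact ⟨n, a, by rw [Algebra.linearMap_apply, ← h, Algebra.smul_def, map_pow]⟩
  obtain ⟨r, hr, hsurj⟩ := exists_mem_smul_surjective_of_ideal_smul_top_eq_top
    (ideal_smul_top_quotient_eq_top hm N)
  exact ⟨r, hr, isUnit_algebraMap_of_smul_surjective hm hsurj⟩

end LocalAlgebra

theorem ringKrullDim_le_one_of_forall_mem_eq_closedPoint {R : Type*} [CommRing R] [IsLocalRing R]
    [IsNoetherianRing R] {r : R} (hr : r ∈ IsLocalRing.maximalIdeal R)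
    (h : ∀ p : PrimeSpectrum R, r ∈ p.asIdeal → p = IsLocalRing.closedPoint R) :
    ringKrullDim R ≤ 1 := by
  have hmin : IsLocalRing.maximalIdeal R ∈ (Ideal.span {r}).minimalPrimes := by
    refine ⟨⟨inferInstance, (Ideal.span_singleton_le_iff_mem _).2 hr⟩, fun q ⟨hq, hrq⟩ _ ↦ ?_⟩
    exact (congrArg PrimeSpectrum.asIdeal
      (h ⟨q, hq⟩ ((Ideal.span_singleton_le_iff_mem _).1 hrq))).ge
  rw [← IsLocalRing.maximalIdeal_height_eq_ringKrullDim]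
  exact_mod_cast Ideal.height_le_one_of_isPrincipal_of_mem_minimalPrimes _ _ hmin

section Spec

variable {A : CommRingCat} {V : (Spec A).Opens}

theorem basicOpen_algebraMap (f : A) : (Spec A).basicOpen (algebraMap A Γ(Spec A, V) f) =
    V ⊓ PrimeSpectrum.basicOpen f := by
  rw [IsAffineOpen.algebraMap_Spec_obj, CommRingCat.hom_comp, RingHom.comp_apply,
    Scheme.basicOpen_res]
  exact congrArg (V ⊓ ·) (basicOpen_eq_of_affine f)

theorem ideal_map_algebraMap_eq_top_of_isAffineOpen (hV : IsAffineOpen V) {I : Ideal A}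
    (hI : ∀ p ∈ V, ¬ I ≤ PrimeSpectrum.asIdeal p) : I.map (algebraMap A Γ(Spec A, V)) = ⊤ := by
  refine hV.self_le_iSup_basicOpen_iff.1 fun p hp ↦ ?_
  obtain ⟨f, hf, hfp⟩ := SetLike.not_le_iff_exists.1 (hI p hp)
  refine TopologicalSpace.Opens.mem_iSup.2 ⟨⟨_, f, hf, rfl⟩, ?_⟩
  rw [basicOpen_algebraMap]
  exact ⟨hp, hfp⟩

theorem exists_algebraMap_pow_mul_eq_algebraMap (hV : IsAffineOpen V) {f : A}
    (hf : PrimeSpectrum.basicOpen f ≤ V) (b : Γ(Spec A, V)) :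
    ∃ (n : ℕ) (a : A), algebraMap A Γ(Spec A, V) f ^ n * b = algebraMap A Γ(Spec A, V) a := by
  set g := algebraMap A Γ(Spec A, V) f
  have hg : (Spec A).basicOpen g = PrimeSpectrum.basicOpen f :=
    (basicOpen_algebraMap f).trans (inf_eq_right.2 hf)
  have : IsLocalization.Away g Γ(Spec A, (Spec A).basicOpen g) := hV.isLocalization_basicOpen g
  have : IsLocalization.Away f Γ(Spec A, (Spec A).basicOpen g) := by
    rw [hg]
    infer_instance
  let ρ := algebraMap Γ(Spec A, V) Γ(Spec A, (Spec A).basicOpen g)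
  have hρ (a : A) : ρ (algebraMap A Γ(Spec A, V) a) = algebraMap A _ a := rfl
  obtain ⟨n, a, hna⟩ := IsLocalization.Away.surj f (ρ b)
  have hρna : ρ (b * g ^ n) = ρ (algebraMap A _ a) := by rw [map_mul, map_pow, hρ, hρ, hna]
  obtain ⟨m, hm⟩ := IsLocalization.Away.exists_of_eq g hρna
  refine ⟨m + n, f ^ m * a, ?_⟩
  rw [map_mul, map_pow, ← hm, pow_add]
  ring

theorem le_basicOpen_of_isUnit_algebraMap {r : A} (hr : IsUnit (algebraMap A Γ(Spec A, V) r)) :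
    V ≤ PrimeSpectrum.basicOpen r :=
  inf_eq_left.1 ((basicOpen_algebraMap r).symm.trans (Scheme.basicOpen_of_isUnit _ hr))

theorem ringKrullDim_le_one_of_isAffineOpen [IsLocalRing A] [IsNoetherianRing A]
    (hV : IsAffineOpen V) (hVm : ∀ p : Spec A, p ∈ V ↔ p ≠ IsLocalRing.closedPoint A) :
    ringKrullDim A ≤ 1 := by
  have : IsNoetherianRing Γ(Spec A, V) := IsLocallyNoetherian.component_noetherian ⟨V, hV⟩
  have hm : (IsLocalRing.maximalIdeal A).map (algebraMap A Γ(Spec A, V)) = ⊤ := by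
    refine ideal_map_algebraMap_eq_top_of_isAffineOpen hV fun p hp hle ↦ (hVm p).1 hp ?_
    refine PrimeSpectrum.ext ?_
    exact ((IsLocalRing.maximalIdeal.isMaximal A).eq_of_le p.2.ne_top hle).symm
  have hD : ∀ f ∈ IsLocalRing.maximalIdeal A, PrimeSpectrum.basicOpen f ≤ V := by
    rintro f hf p hp
    refine (hVm p).2 ?_
    rintro rfl
    exact hp hf
  obtain ⟨r, hr, hu⟩ := exists_mem_maximalIdeal_isUnit_algebraMap hm fun b f hf ↦
    exists_algebraMap_pow_mul_eq_algebraMap hV (hD f hf) b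
  refine ringKrullDim_le_one_of_forall_mem_eq_closedPoint hr fun p hrp ↦ ?_
  by_contra hp
  exact le_basicOpen_of_isUnit_algebraMap hu ((hVm p).2 hp) hrp

end Spec

theorem exists_mem_specializes_of_dense {α : Type*} [TopologicalSpace α]
    [TopologicalSpace.NoetherianSpace α] [QuasiSober α] {U : Set α} (hU : IsOpen U)
    (hUdense : Dense U) (x : α) : ∃ y ∈ U, y ⤳ x := by
  obtain ⟨O, hO, hOne, hOZ⟩ :=
    TopologicalSpace.NoetherianSpace.exists_isOpen_nonempty_subset_irreducibleComponent
      (irreducibleComponent x) (irreducibleComponent_mem_irreducibleComponents x)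
  obtain ⟨u, huO, huU⟩ := hUdense.inter_open_nonempty O hO hOne
  obtain ⟨y, hy⟩ := QuasiSober.sober (isIrreducible_irreducibleComponent (x := x))
    isClosed_irreducibleComponent
  exact ⟨y, (hy.specializes (hOZ huO)).mem_open hU huU, hy.specializes mem_irreducibleComponent⟩

theorem exists_mem_specializes_of_dense_opens {X : Scheme} [IsLocallyNoetherian X] {U : X.Opens}
    (hUdense : Dense (U : Set X)) (x : X) : ∃ y ∈ U, y ⤳ x := by
  obtain ⟨W, hW, hxW, -⟩ := exists_isAffineOpen_mem_and_subset (x := x) (U := ⊤) trivial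
  have : IsNoetherianRing Γ(X, W) := IsLocallyNoetherian.component_noetherian ⟨W, hW⟩
  have : TopologicalSpace.NoetherianSpace (W : Set X) := noetherianSpace_of_isAffineOpen W hW
  have : QuasiSober (W : Set X) := inferInstanceAs (QuasiSober W.toScheme)
  obtain ⟨y, hyU, hyx⟩ := exists_mem_specializes_of_dense
    (U.isOpen.preimage continuous_subtype_val) (hUdense.preimage W.isOpen.isOpenMap_subtype_val)
    (⟨x, hxW⟩ : W)
  exact ⟨y, hyU, hyx.map continuous_subtype_val⟩

theorem eq_of_specializes_of_isGenericPoint {α : Type*} [TopologicalSpace α] [T0Space α]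
    {Z T : Set α} (hZ : IsClosed Z) (hTmax : ∀ T' ⊆ Z, IsIrreducible T' → T ⊆ T' → T = T')
    {t y : α} (ht : IsGenericPoint t T) (hyt : y ⤳ t) (hy : y ∈ Z) : y = t := by
  have hTy : T ⊆ closure {y} := ht.def ▸ hyt.closure_subset
  have h := hTmax _ (closure_minimal (by simpa using hy) hZ) isIrreducible_singleton.closure hTy
  exact IsGenericPoint.eq h.symm ht

theorem exists_isGenericPoint_of_maximal {α : Type*} [TopologicalSpace α] [QuasiSober α]
    {Z T : Set α} (hZ : IsClosed Z) (hT : T ⊆ Z) (hTirr : IsIrreducible T)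
    (hTmax : ∀ T' ⊆ Z, IsIrreducible T' → T ⊆ T' → T = T') : ∃ t, IsGenericPoint t T := by
  have hTclosure : closure T = T :=
    (hTmax _ (closure_minimal hT hZ) hTirr.closure subset_closure).symm
  exact QuasiSober.sober hTirr (closure_eq_iff_isClosed.1 hTclosure)

section Stalk

variable {X : Scheme} {U : X.Opens} {t : X}

theorem mem_fromSpecStalk_preimage_iff_ne_closedPoint (htU : t ∉ U)
    (ht : ∀ y, y ⤳ t → y ∉ U → y = t) (p : Spec (X.presheaf.stalk t)) :
    p ∈ X.fromSpecStalk t ⁻¹ᵁ U ↔ p ≠ IsLocalRing.closedPoint (X.presheaf.stalk t) := by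
  have hclosed : X.fromSpecStalk t (IsLocalRing.closedPoint (X.presheaf.stalk t)) = t :=
    Scheme.fromSpecStalk_closedPoint
  refine ⟨fun hp h ↦ htU ?_, fun hp ↦ by_contra fun hpU ↦ hp ?_⟩
  · rw [h] at hp
    exact hclosed ▸ hp
  · have hpt : X.fromSpecStalk t p ⤳ t :=
      (Scheme.range_fromSpecStalk (X := X) (x := t)).le (Set.mem_range_self p)
    exact (X.fromSpecStalk t).isEmbedding.injective ((ht _ hpt hpU).trans hclosed.symm)

theorem isAffineHom_ι_of_isAffineOpen [X.IsSeparated] (hU : IsAffineOpen U) : IsAffineHom U.ι := by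
  have : IsAffine U := hU
  have : IsSeparated (Limits.terminal.from X) := inferInstance
  exact .of_comp U.ι (Limits.terminal.from X)

theorem isAffineOpen_preimage_of_isAffineHom_ι {Y : Scheme} [IsAffine Y] (f : Y ⟶ X)
    [IsAffineHom U.ι] : IsAffineOpen (f ⁻¹ᵁ U) := by
  have : IsAffineHom (f ⁻¹ᵁ U).ι :=
    MorphismProperty.of_isPullback (P := @IsAffineHom) (isPullback_morphismRestrict f U) ‹_›
  exact isAffine_of_isAffineHom (f ⁻¹ᵁ U).ι

theorem ringKrullDim_stalk_le_one [IsLocallyNoetherian X] [IsAffineHom U.ι] (htU : t ∉ U)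
    (ht : ∀ y, y ⤳ t → y ∉ U → y = t) : ringKrullDim (X.presheaf.stalk t) ≤ 1 :=
  ringKrullDim_le_one_of_isAffineOpen (isAffineOpen_preimage_of_isAffineHom_ι _)
    (mem_fromSpecStalk_preimage_iff_ne_closedPoint htU ht)

theorem one_le_ringKrullDim_stalk {y : X} (hyt : y ⤳ t) (hne : y ≠ t) :
    1 ≤ ringKrullDim (X.presheaf.stalk t) := by
  obtain ⟨p, rfl⟩ := (Scheme.range_fromSpecStalk (X := X) (x := t)).ge hyt
  refine Order.one_le_krullDim_iff.2 ⟨p, IsLocalRing.closedPoint _, lt_of_le_of_ne ?_ ?_⟩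
  · exact IsLocalRing.le_maximalIdeal p.2.ne_top
  · rintro rfl
    exact hne Scheme.fromSpecStalk_closedPoint

end Stalk

theorem complement_of_dense_affine_open_has_pure_codimension_one_general
    (X : Scheme) [IsLocallyNoetherian X] (U : X.Opens) [IsAffineHom U.ι]
    (hUdense : Dense (U : Set X)) (T : Set X) (hT : T ⊆ ((U : Set X))ᶜ) (hTirr : IsIrreducible T)
    (hTmax : ∀ T' : Set X, T' ⊆ ((U : Set X))ᶜ → IsIrreducible T' → T ⊆ T' → T = T') :
    ∃ t : X, IsGenericPoint t T ∧ ringKrullDim (X.presheaf.stalk t) = 1 := by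
  have hUc : IsClosed (U : Set X)ᶜ := U.isOpen.isClosed_compl
  obtain ⟨t, ht⟩ := exists_isGenericPoint_of_maximal hUc hT hTirr hTmax
  have htU : t ∉ U := hT ht.mem
  obtain ⟨y, hyU, hyt⟩ := exists_mem_specializes_of_dense_opens hUdense t
  refine ⟨t, ht, le_antisymm ?_ ?_⟩
  · exact ringKrullDim_stalk_le_one htU fun y ↦ eq_of_specializes_of_isGenericPoint hUc hTmax ht
  · exact one_le_ringKrullDim_stalk hyt fun h ↦ htU (h ▸ hyU)

/-- Complement of a dense affine open has pure codimension one: if `U` is a dense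
affine open subset of a separated irreducible noetherian scheme `X`, then every irreducible
component `T` of `X ∖ U` has codimension one in `X`, i.e. the Krull dimension of the local
ring of `X` at the generic point of `T` equals `1`. -/
theorem complement_of_dense_affine_open_has_pure_codimension_one
    (X : Scheme) [X.IsSeparated] [IrreducibleSpace X] [IsNoetherian X]
    (U : X.Opens) (hUaff : IsAffineOpen U) (hUdense : Dense (U : Set X))
    -- `T` is an irreducible component of the closed complement `X ∖ U`
    (T : Set X) (hT : T ⊆ ((U : Set X))ᶜ) (hTirr : IsIrreducible T)
    (hTmax : ∀ T' : Set X, T' ⊆ ((U : Set X))ᶜ → IsIrreducible T' → T ⊆ T' → T = T') :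
    -- `T` has a generic point at which the local ring of `X` has Krull dimension one
    ∃ t : X, IsGenericPoint t T ∧ ringKrullDim (X.presheaf.stalk t) = 1 := by
  have : IsAffineHom U.ι := isAffineHom_ι_of_isAffineOpen hUaff
  exact complement_of_dense_affine_open_has_pure_codimension_one_general X U hUdense T hT hTirr
    hTmax
end
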